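/- arXiv:1408.0632 — 3 statements merged into one kernel-verified Lean document; each statement's English description precedes it below -/
import Mathlib

section
/- Fix x ∈ ℝ. Then: (i) sup_{y ∈ ℝ} |∫_x^y K_Ai(u,x) du| < ∞; (ii) there is C > 0 such that |K_Ai(x,y)| ≤ C·|y|^{−3/4} for all y with |y| ≥ |x| + 1; (iii) there is C > 0 such that the derivative of y ↦ K_Ai(x,y) satisfies |∂_y K_Ai(x,y)| ≤ C·|y|^{−1/4} for all y with |y| ≥ |x| + 1. -/
open MeasureTheory Filter Set

noncomputable section

/-- The Airy function `Ai(x) = (1/π)·lim_{b→∞} ∫_0^b cos(t³/3 + x·t) dt`. -/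
def Ai (x : ℝ) : ℝ :=
  (1 / Real.pi) *
    limUnder Filter.atTop (fun b : ℝ => ∫ t in (0:ℝ)..b, Real.cos (t ^ 3 / 3 + x * t))

/-- The Airy kernel. -/
def KAi (x y : ℝ) : ℝ :=
  if x = y then (deriv Ai x) ^ 2 - x * (Ai x) ^ 2
  else (Ai x * deriv Ai y - deriv Ai x * Ai y) / (x - y)

/-- One-point correlation function of the Airy₂ random point field. -/
def rho (x : ℝ) : ℝ := (deriv Ai x) ^ 2 - x * (Ai x) ^ 2

/-- Probabilists' Hermite polynomial `Ĥ_m(x) = (−1)^m e^{x²/2} (d/dx)^m e^{−x²/2}`. -/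
def hermiteP (m : ℕ) (x : ℝ) : ℝ :=
  (-1 : ℝ) ^ m * Real.exp (x ^ 2 / 2) * iteratedDeriv m (fun t => Real.exp (-t ^ 2 / 2)) x

/-- Normalized oscillator function `φ_m`. -/
def osc (m : ℕ) (x : ℝ) : ℝ :=
  (2 * Real.pi) ^ (-(1:ℝ)/4) * ((m.factorial : ℝ)) ^ (-(1:ℝ)/2) *
    Real.exp (-x ^ 2 / 4) * hermiteP m x

/-- `ψ_mⁿ(x) = n^{1/12}·φ_m(2√n + n^{−1/6}·x)`. -/
def psiUp (n m : ℕ) (x : ℝ) : ℝ :=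
  (n : ℝ) ^ ((1:ℝ)/12) * osc m (2 * Real.sqrt n + (n : ℝ) ^ (-(1:ℝ)/6) * x)

/-- `ψ_n = ψ_nⁿ`. -/
def psiN (n : ℕ) : ℝ → ℝ := psiUp n n

/-- The finite-`n` Airy kernel. -/
def KAiN (n : ℕ) (x y : ℝ) : ℝ :=
  if x = y then
    (deriv (psiN n) x) ^ 2 - psiN n x * deriv (deriv (psiN n)) x
      - (1 / (2 * (n : ℝ) ^ ((1:ℝ)/3))) * (psiN n x) ^ 2
  else
    (psiN n x * deriv (psiN n) y - deriv (psiN n) x * psiN n y) / (x - y)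
      - (1 / (2 * (n : ℝ) ^ ((1:ℝ)/3))) * (psiN n x * psiN n y)

/-- `(εf)(x) = (1/2)·∫_ℝ sign(x − y)·f(y) dy`. -/
def epsF (f : ℝ → ℝ) (x : ℝ) : ℝ := (1/2) * ∫ y : ℝ, Real.sign (x - y) * f y

/-- `εψ_n`. -/
def epsPsi (n : ℕ) : ℝ → ℝ := epsF (psiN n)

/-- `J₁(x,y) = K_Ai(x,y) + (1/2)·Ai(x)·(1 − ∫_y^∞ Ai(u) du)`. -/
def J1 (x y : ℝ) : ℝ := KAi x y + (1/2) * Ai x * (1 - ∫ u in Set.Ioi y, Ai u)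

/-- Scalar part of the quaternion product of Airy₁ kernels. -/
def L1 (x y : ℝ) : ℝ :=
  J1 x y * J1 y x -
    deriv (fun v => J1 x v) y * ((∫ u in x..y, J1 u x) - (1/2) * Real.sign (y - x))

/-- `J₁ⁿ(x,y) = K_Aiⁿ(x,y) + (1/2)·ψ_{n−1}ⁿ(x)·(εψ_n)(y)`. -/
def J1N (n : ℕ) (x y : ℝ) : ℝ :=
  KAiN n x y + (1/2) * psiUp n (n - 1) x * epsPsi n y

/-- Scalar part of the quaternion product of finite-`n` Airy₁ kernels. -/
def L1N (n : ℕ) (x y : ℝ) : ℝ :=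
  J1N n x y * J1N n y x -
    deriv (fun v => J1N n x v) y * ((∫ u in x..y, J1N n u x) - (1/2) * Real.sign (y - x))

/-- `ρ̂(x) = (1/π)·√(−x)` for `x < 0`, and `0` otherwise. -/
def rhoHat (x : ℝ) : ℝ := if x < 0 then Real.sqrt (-x) / Real.pi else 0

/-- `ρ̂ⁿ(x) = (1/π)·√(−x·(1 + x/(4·n^{2/3})))` on `(−4n^{2/3}, 0)`, and `0` otherwise. -/
def rhoHatN (n : ℕ) (x : ℝ) : ℝ :=
  if -(4 * (n : ℝ) ^ ((2:ℝ)/3)) < x ∧ x < 0 then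
    Real.sqrt (-x * (1 + x / (4 * (n : ℝ) ^ ((2:ℝ)/3)))) / Real.pi
  else 0

/-- `G_{a,b,c}(x,y) = |x|^{−a}·|y|^{−b}·|x−y|^{−c}`. -/
def Gf (a b c : ℝ) (x y : ℝ) : ℝ := |x| ^ (-a) * |y| ^ (-b) * |x - y| ^ (-c)

/-- `Ĝ_{a,b,c}(x,y) = G_{a,b,c}(x,y) + G_{a,b,c}(y,x)`. -/
def Ghat (a b c : ℝ) (x y : ℝ) : ℝ := Gf a b c x y + Gf a b c y x

/-- Soft-edge one-point correlation function of the `n`-point GUE ensemble. -/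
def rhoN (n : ℕ) (x : ℝ) : ℝ :=
  (deriv (psiN n) x) ^ 2 - (x ^ 2 / (4 * (n : ℝ) ^ ((2:ℝ)/3)) + x) * (psiN n x) ^ 2

end


namespace AiryAux

open Complex in
/-- The Airy phase. -/
noncomputable def EE (x : ℝ) (z : ℂ) : ℂ := Complex.exp (I * (z ^ 3 / 3 + x * z))

open Complex in
lemma norm_EE (x t s : ℝ) :
    ‖EE x (t + s * I)‖ = Real.exp (-(t ^ 2 * s) + s ^ 3 / 3 - x * s) := by
  rw [EE, Complex.norm_exp]
  congr 1
  have : I * (((t:ℂ) + s * I) ^ 3 / 3 + x * (t + s * I))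
      = ((-(t ^ 2 * s) + s ^ 3 / 3 - x * s : ℝ) : ℂ)
        + ((t ^ 3 / 3 - t * s ^ 2 + x * t : ℝ) : ℂ) * I := by
    push_cast
    have h2 : I ^ 2 = -1 := I_sq
    have h3 : I ^ 3 = -I := by rw [pow_succ, h2]; ring
    have h4 : I ^ 4 = 1 := by rw [show 4 = 2 * 2 from rfl, pow_mul, h2]; ring
    ring_nf
    simp only [h2, h3, h4]
    ring
  rw [this, Complex.add_re, Complex.re_ofReal_mul, Complex.ofReal_re]
  simp

open Complex in
lemma norm_EE1 (x t : ℝ) : ‖EE x (t + I)‖ = Real.exp (-t ^ 2 + 1 / 3 - x) := by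
  have := norm_EE x t 1
  simpa using this

open Complex in
/-- The integrand of the shifted contour. -/
noncomputable def ff (n : ℕ) (x t : ℝ) : ℂ := (I * (t + I)) ^ n * EE x (t + I)

lemma ff_cont (n : ℕ) (x : ℝ) : Continuous (ff n x) := by
  unfold ff EE; fun_prop

lemma norm_ff_le (n : ℕ) (x t : ℝ) (ht : 0 ≤ t) :
    ‖ff n x t‖ ≤ (n.factorial * Real.exp 2) * Real.exp (-x) * Real.exp (-(1/2) * t ^ 2) := by
  have h1 : ‖Complex.I * ((t:ℂ) + Complex.I)‖ ≤ t + 1 := by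
    rw [norm_mul, Complex.norm_I, one_mul]
    refine (norm_add_le _ _).trans ?_
    simp [abs_of_nonneg ht]
  have h2 : (t + 1) ^ n ≤ n.factorial * Real.exp (t + 1) := by
    have := Real.pow_div_factorial_le_exp (t + 1) (by linarith) n
    rw [div_le_iff₀ (by positivity)] at this
    linarith
  rw [ff, norm_mul, norm_pow, norm_EE1]
  calc ‖Complex.I * ((t:ℂ) + Complex.I)‖ ^ n * Real.exp (-t ^ 2 + 1 / 3 - x)
      ≤ (n.factorial * Real.exp (t + 1)) * Real.exp (-t ^ 2 + 1 / 3 - x) := by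
        gcongr
        exact (pow_le_pow_left₀ (norm_nonneg _) h1 n).trans h2
    _ = n.factorial * Real.exp ((t + 1) + (-t ^ 2 + 1 / 3 - x)) := by rw [Real.exp_add (t+1)]; ring
    _ ≤ n.factorial * Real.exp (2 + (-x) + (-(1/2) * t ^ 2)) := by
        refine mul_le_mul_of_nonneg_left (Real.exp_le_exp.2 ?_) (by positivity)
        nlinarith [sq_nonneg (t - 1)]
    _ = _ := by rw [Real.exp_add, Real.exp_add]; ring

lemma int_gauss : IntegrableOn (fun t : ℝ => Real.exp (-(1/2) * t ^ 2)) (Ioi 0) :=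
  (integrable_exp_neg_mul_sq (by norm_num)).integrableOn

lemma ff_int (n : ℕ) (x : ℝ) : IntegrableOn (ff n x) (Ioi 0) := by
  refine Integrable.mono' (int_gauss.const_mul ((n.factorial * Real.exp 2) * Real.exp (-x)))
    (ff_cont n x).aestronglyMeasurable ?_
  refine (ae_restrict_iff' measurableSet_Ioi).2 (Eventually.of_forall fun t ht => ?_)
  exact norm_ff_le n x t (le_of_lt ht)

/-- Moments. -/
noncomputable def FF (n : ℕ) (x : ℝ) : ℂ := ∫ t in Ioi (0:ℝ), ff n x t

lemma norm_FF_le (n : ℕ) : ∃ C : ℝ, ∀ x, ‖FF n x‖ ≤ C * Real.exp (-x) := by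
  refine ⟨(n.factorial * Real.exp 2) * ∫ t in Ioi (0:ℝ), Real.exp (-(1/2) * t ^ 2), fun x => ?_⟩
  have := norm_integral_le_of_norm_le
    (int_gauss.const_mul ((n.factorial * Real.exp 2) * Real.exp (-x))) (f := ff n x)
    ((ae_restrict_iff' measurableSet_Ioi).2 (Eventually.of_forall fun t ht =>
      norm_ff_le n x t (le_of_lt ht)))
  rw [integral_const_mul] at this
  rw [FF]
  linarith

lemma FF_deriv (n : ℕ) (x : ℝ) : HasDerivAt (FF n) (FF (n+1) x) x := by
  refine (hasDerivAt_integral_of_dominated_loc_of_deriv_le (s := Ioi (x - 1))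
    (bound := fun t => ((n+1).factorial * Real.exp 2) * Real.exp (-(x-1)) *
      Real.exp (-(1/2) * t ^ 2)) (F := fun x t => ff n x t) (F' := fun x t => ff (n+1) x t)
    (Ioi_mem_nhds (by linarith)) ?_ (ff_int n x) (ff_cont _ x).aestronglyMeasurable ?_
    (int_gauss.const_mul _) ?_).2
  · exact Eventually.of_forall fun y => (ff_cont n y).aestronglyMeasurable
  · refine (ae_restrict_iff' measurableSet_Ioi).2 (Eventually.of_forall fun t ht y hy => ?_)
    refine (norm_ff_le (n+1) y t (le_of_lt ht)).trans ?_
    have : x - 1 < y := hy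
    gcongr
  · refine Eventually.of_forall fun t y _ => ?_
    have h : HasDerivAt (fun y : ℝ => Complex.I * (((t:ℂ) + Complex.I) ^ 3 / 3
        + (y:ℂ) * (t + Complex.I))) (Complex.I * ((t:ℂ) + Complex.I)) y := by
      have h0 : HasDerivAt (fun y : ℝ => (y : ℂ)) 1 y := Complex.ofRealCLM.hasDerivAt
      refine (((h0.mul_const ((t:ℂ) + Complex.I)).const_add
        (((t:ℂ) + Complex.I) ^ 3 / 3)).const_mul Complex.I).congr_deriv ?_
      ring
    have := (h.cexp).const_mul ((Complex.I * ((t:ℂ) + Complex.I)) ^ n)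
    unfold ff EE
    refine this.congr_deriv ?_
    ring

lemma EE_tendsto (x s : ℝ) (hs : 0 < s) :
    Tendsto (fun b : ℝ => EE x (b + s * Complex.I)) atTop (nhds 0) := by
  rw [tendsto_zero_iff_norm_tendsto_zero]
  simp_rw [norm_EE]
  refine Real.tendsto_exp_atBot.comp ?_
  have h1 : Tendsto (fun b : ℝ => b ^ 2 * s) atTop atTop :=
    (tendsto_pow_atTop two_ne_zero).atTop_mul_const hs
  have := tendsto_atBot_add_const_right atTop (s ^ 3 / 3 - x * s) (tendsto_neg_atTop_atBot.comp h1)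
  refine this.congr fun b => ?_
  simp only [Function.comp]
  ring

lemma side_tendsto (x : ℝ) :
    Tendsto (fun b : ℝ => ∫ s in (0:ℝ)..1, EE x (b + s * Complex.I)) atTop (nhds 0) := by
  have := intervalIntegral.tendsto_integral_filter_of_dominated_convergence
    (l := (atTop : Filter ℝ)) (a := 0) (b := 1) (μ := volume)
    (F := fun b s => EE x (b + s * Complex.I)) (f := fun _ => 0)
    (fun _ => Real.exp (1/3 + |x|)) ?_ ?_ (by simp) ?_
  · simpa using this
  · refine Eventually.of_forall fun b => ?_
    apply Continuous.aestronglyMeasurable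
    unfold EE; fun_prop
  · refine Eventually.of_forall fun b => Eventually.of_forall fun s hs => ?_
    rw [uIoc_of_le zero_le_one] at hs
    rw [norm_EE]
    apply Real.exp_le_exp.2
    have h0 : 0 ≤ b ^ 2 * s := mul_nonneg (sq_nonneg _) hs.1.le
    have h1 : s ^ 3 ≤ 1 := pow_le_one₀ hs.1.le hs.2
    have h2 : -(x * s) ≤ |x| := by
      refine (neg_le_abs _).trans ?_
      rw [abs_mul, abs_of_pos hs.1]
      nlinarith [abs_nonneg x, hs.2]
    linarith
  · refine Eventually.of_forall fun s hs => ?_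
    rw [uIoc_of_le zero_le_one] at hs
    exact EE_tendsto x s hs.1

lemma EE_real_re (x t : ℝ) : (EE x t).re = Real.cos (t ^ 3 / 3 + x * t) := by
  rw [EE, show Complex.I * ((t:ℂ) ^ 3 / 3 + x * t) = ((t ^ 3 / 3 + x * t : ℝ) : ℂ) * Complex.I by
    push_cast; ring]
  exact Complex.exp_ofReal_mul_I_re _

lemma EE_imag (x s : ℝ) : EE x (s * Complex.I) = ((Real.exp (s ^ 3 / 3 - x * s) : ℝ) : ℂ) := by
  rw [EE, Complex.ofReal_exp]
  congr 1
  push_cast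
  have h4 : Complex.I ^ 4 = 1 := by
    rw [show 4 = 2 * 2 from rfl, pow_mul, Complex.I_sq]; ring
  ring_nf
  simp only [h4, Complex.I_sq]
  ring

lemma contour (x b : ℝ) : ∫ t in (0:ℝ)..b, Real.cos (t ^ 3 / 3 + x * t) =
    (∫ t in (0:ℝ)..b, ff 0 x t).re
      - (Complex.I * ∫ s in (0:ℝ)..1, EE x (b + s * Complex.I)).re := by
  have h := Complex.integral_boundary_rect_eq_zero_of_differentiableOn (EE x) 0 (b + Complex.I)
    (by
      have : Differentiable ℂ (EE x) := by unfold EE; fun_prop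
      exact this.differentiableOn)
  have hr : ∫ t in (0:ℝ)..b, Real.cos (t ^ 3 / 3 + x * t) = (∫ t in (0:ℝ)..b, EE x t).re := by
    have hc : Continuous fun t : ℝ => EE x t := by unfold EE; fun_prop
    have := intervalIntegral.intervalIntegral_re (hc.intervalIntegrable (μ := volume) 0 b)
    simp only [RCLike.re_eq_complex_re, EE_real_re] at this
    exact this
  have hi : (∫ y in (0:ℝ)..1, EE x (y * Complex.I))
      = ((∫ y in (0:ℝ)..1, Real.exp (y ^ 3 / 3 - x * y) : ℝ) : ℂ) := by
    simp_rw [EE_imag]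
    exact intervalIntegral.integral_ofReal
  simp only [Complex.zero_re, Complex.zero_im, Complex.add_re, Complex.add_im, Complex.ofReal_re,
    Complex.ofReal_im, Complex.I_re, Complex.I_im, add_zero, zero_add, Complex.ofReal_zero,
    Complex.ofReal_one, zero_mul, one_mul, smul_eq_mul, hi] at h
  have h2 := congrArg Complex.re h
  simp only [Complex.sub_re, Complex.add_re, Complex.zero_re] at h2
  have h3 : (Complex.I * ((∫ y in (0:ℝ)..1, Real.exp (y ^ 3 / 3 - x * y) : ℝ) : ℂ)).re = 0 := by
    simp
  rw [h3] at h2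
  rw [hr]
  simp only [ff, pow_zero, one_mul]
  linarith

lemma Ai_eq (x : ℝ) : Ai x = (1 / Real.pi) * (FF 0 x).re := by
  rw [Ai]
  congr 1
  apply Tendsto.limUnder_eq
  simp_rw [contour]
  have h1 := intervalIntegral_tendsto_integral_Ioi (0:ℝ) (ff_int 0 x) tendsto_id
  have h1' := (Complex.continuous_re.tendsto _).comp h1
  have h2 := (Complex.continuous_re.tendsto _).comp ((side_tendsto x).const_mul Complex.I)
  have := h1'.sub h2
  simpa [FF] using this

lemma Ai_hasDeriv (x : ℝ) : HasDerivAt Ai ((1 / Real.pi) * (FF 1 x).re) x := by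
  have h : Ai = fun x => (1 / Real.pi) * (FF 0 x).re := funext Ai_eq
  rw [h]
  exact (Complex.reCLM.hasFDerivAt.comp_hasDerivAt x (FF_deriv 0 x)).const_mul _

lemma deriv_Ai : deriv Ai = fun x => (1 / Real.pi) * (FF 1 x).re :=
  funext fun x => (Ai_hasDeriv x).deriv

lemma FF_ode (x : ℝ) : (FF 2 x).re = x * (FF 0 x).re := by
  have hI : ∀ t, HasDerivAt (fun t : ℝ => Complex.I * EE x (t + Complex.I))
      (ff 2 x t - x * ff 0 x t) t := by
    intro t
    have h0 : HasDerivAt (fun y : ℝ => (y : ℂ) + Complex.I) 1 t :=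
      (Complex.ofRealCLM.hasDerivAt (x := t)).add_const _
    have := ((((h0.pow 3).div_const 3).add (h0.const_mul (x:ℂ))).const_mul Complex.I).cexp.const_mul
      Complex.I
    unfold ff EE
    refine this.congr_deriv ?_
    simp only [Pi.add_apply, Pi.pow_apply]
    symm
    have h2 : Complex.I ^ 2 = -1 := Complex.I_sq
    rw [mul_pow, h2]
    set e := Complex.exp (Complex.I * (((t:ℂ) + Complex.I) ^ 3 / 3 + x * (t + Complex.I)))
    set z := (t:ℂ) + Complex.I
    have : Complex.I * Complex.I = -1 := Complex.I_mul_I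
    push_cast
    linear_combination (-(x:ℂ) * e - z^2 * e) * this
  have hint : IntegrableOn (fun t => ff 2 x t - x * ff 0 x t) (Ioi 0) :=
    (ff_int 2 x).sub ((ff_int 0 x).const_mul _)
  have ht : Tendsto (fun t : ℝ => Complex.I * EE x (t + Complex.I)) atTop (nhds 0) := by
    have := (EE_tendsto x 1 one_pos).const_mul Complex.I
    simpa using this
  have := integral_Ioi_of_hasDerivAt_of_tendsto (hI 0).continuousAt.continuousWithinAt
    (fun t _ => hI t) hint ht
  rw [integral_sub (ff_int 2 x) ((ff_int 0 x).const_mul _), integral_const_mul] at this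
  change FF 2 x - x * FF 0 x = _ at this
  have h3 := congrArg Complex.re this
  have h5 := EE_imag x 1
  simp only [Complex.ofReal_one, one_mul] at h5
  simp only [Complex.ofReal_zero, zero_add, h5] at h3
  simp [-Complex.ofReal_exp] at h3
  linarith

lemma dAi_hasDeriv (x : ℝ) : HasDerivAt (deriv Ai) (x * Ai x) x := by
  rw [deriv_Ai]
  have := (Complex.reCLM.hasFDerivAt.comp_hasDerivAt x (FF_deriv 1 x)).const_mul (1 / Real.pi)
  refine this.congr_deriv ?_
  rw [Ai_eq, Complex.reCLM_apply, show 1 + 1 = 2 from rfl, FF_ode]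
  ring

lemma Ai_hd (x : ℝ) : HasDerivAt Ai (deriv Ai x) x := (Ai_hasDeriv x).differentiableAt.hasDerivAt

lemma Ai_pos_bounds : ∃ C : ℝ, 0 < C ∧ ∀ y : ℝ, 1 ≤ y →
    |Ai y| ≤ C * y ^ (-(1:ℝ)/4) ∧ |deriv Ai y| ≤ C * y ^ ((1:ℝ)/4) := by
  obtain ⟨C0, h0⟩ := norm_FF_le 0
  obtain ⟨C1, h1⟩ := norm_FF_le 1
  refine ⟨1 / Real.pi * (|C0| + |C1|) + 1, by positivity, fun y hy => ?_⟩
  have hpi : 0 < 1 / Real.pi := by positivity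
  have he : Real.exp (-y) ≤ y ^ (-(1:ℝ)/4) := by
    have : Real.exp (-y) ≤ y⁻¹ := by
      rw [Real.exp_neg]
      have := Real.add_one_le_exp y
      gcongr; linarith
    refine this.trans ?_
    rw [← Real.rpow_neg_one]
    exact Real.rpow_le_rpow_of_exponent_le hy (by norm_num)
  have he2 : Real.exp (-y) ≤ y ^ ((1:ℝ)/4) :=
    he.trans (Real.rpow_le_rpow_of_exponent_le hy (by norm_num))
  have key : ∀ (n : ℕ) (C : ℝ), (∀ x, ‖FF n x‖ ≤ C * Real.exp (-x)) →
      |C| ≤ |C0| + |C1| → ∀ w, Real.exp (-y) ≤ w →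
      |1 / Real.pi * (FF n y).re| ≤ (1 / Real.pi * (|C0| + |C1|) + 1) * w := by
    intro n C hC hle w hw
    have hw0 : 0 < w := (Real.exp_pos _).trans_le hw
    rw [abs_mul, abs_of_pos hpi]
    have := (Complex.abs_re_le_norm (FF n y)).trans (hC y)
    calc 1 / Real.pi * |(FF n y).re| ≤ 1 / Real.pi * ((|C0| + |C1|) * w) := by
          gcongr
          refine this.trans ?_
          gcongr
          exact (le_abs_self _).trans hle
      _ ≤ _ := by linarith
  constructor
  · rw [Ai_eq]
    exact key 0 C0 h0 (by linarith [abs_nonneg C1]) _ he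
  · rw [deriv_Ai]
    exact key 1 C1 h1 (by linarith [abs_nonneg C0]) _ he2

end AiryAux
namespace AiryAux

/-- Energy bound for the reflected Airy equation. -/
lemma energy (f g : ℝ → ℝ) (hf : ∀ s, HasDerivAt f (g s) s) (hg : ∀ s, HasDerivAt g (-s * f s) s) :
    ∃ A : ℝ, ∀ s, 1 ≤ s → √s * f s ^ 2 ≤ A ∧ g s ^ 2 / √s ≤ A := by
  set F : ℝ → ℝ := fun s => g s ^ 2 / √s + √s * f s ^ 2 + f s * g s / (2 * √s ^ 3) with hF
  set P : ℝ → ℝ := fun s => F s * Real.exp (1 / (3 * √s ^ 3)) with hP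
  have hEn : ∀ s, 1 ≤ s → 2 * |f s * g s| ≤ g s ^ 2 / √s + √s * f s ^ 2 := by
    intro s hs
    have hq : 0 < √s := Real.sqrt_pos.2 (by linarith)
    rw [← sub_nonneg]
    rcases abs_cases (f s * g s) with h | h
    · have : g s ^ 2 / √s + √s * f s ^ 2 - 2 * |f s * g s| = (g s - √s * f s) ^ 2 / √s := by
        rw [h.1]; field_simp; ring
      rw [this]; positivity
    · have : g s ^ 2 / √s + √s * f s ^ 2 - 2 * |f s * g s| = (g s + √s * f s) ^ 2 / √s := by
        rw [h.1]; field_simp; ring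
      rw [this]; positivity
  have hc : ∀ s, 1 ≤ s → |f s * g s / (2 * √s ^ 3)| ≤ |f s * g s| / 2 := by
    intro s hs
    have hq : 1 ≤ √s := Real.one_le_sqrt.2 hs
    have hq3 : 1 ≤ √s ^ 3 := one_le_pow₀ hq
    rw [abs_div, abs_of_pos (show 0 < 2 * √s ^ 3 by linarith)]
    gcongr
    linarith
  have hFl : ∀ s, 1 ≤ s → 3 / 4 * (g s ^ 2 / √s + √s * f s ^ 2) ≤ F s := by
    intro s hs
    have h1 := hEn s hs
    have h2 := (neg_le_abs _).trans (hc s hs)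
    simp only [hF]
    linarith
  have hd : ∀ s, 1 ≤ s → HasDerivAt P
      ((-(3/4) * (f s * g s) - F s / 2) / √s ^ 5 * Real.exp (1 / (3 * √s ^ 3))) s := by
    intro s hs
    have hq : 0 < √s := Real.sqrt_pos.2 (by linarith)
    have hs2 : s = √s ^ 2 := (Real.sq_sqrt (by linarith)).symm
    have hsq : HasDerivAt Real.sqrt (1 / (2 * √s)) s := Real.hasDerivAt_sqrt (show s ≠ 0 by linarith)
    have h1 := ((hg s).pow 2).div hsq hq.ne'
    have h2 := hsq.mul ((hf s).pow 2)
    have h3 := ((hf s).mul (hg s)).div ((hsq.pow 3).const_mul 2) (by simp only [Pi.pow_apply]; positivity)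
    have h4 := ((hasDerivAt_const s (1:ℝ)).div ((hsq.pow 3).const_mul 3) (by simp only [Pi.pow_apply]; positivity)).exp
    have h5 := ((h1.add h2).add h3).mul h4
    have e : P = ((((g ^ 2) / Real.sqrt + Real.sqrt * f ^ 2) + (f * g) / (fun y => 2 * (Real.sqrt ^ 3) y))
        * fun x => Real.exp (((fun _ : ℝ => (1:ℝ)) / fun y : ℝ => 3 * (Real.sqrt ^ 3) y) x)) := by
      funext y; simp [hP, hF]
    rw [e]
    refine h5.congr_deriv ?_
    symm
    simp only [hF, Pi.add_apply, Pi.mul_apply, Pi.div_apply, Pi.pow_apply]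
    have e2 : -s * f s = - √s ^ 2 * f s := by rw [← hs2]
    rw [e2]
    generalize √s = q at *
    generalize Real.exp (1 / (3 * q ^ 3)) = ex
    field_simp
    ring
  have hanti : AntitoneOn P (Ici 1) := by
    apply antitoneOn_of_deriv_nonpos (convex_Ici 1)
    · exact fun s hs => (hd s hs).continuousAt.continuousWithinAt
    · intro s hs
      rw [interior_Ici] at hs
      exact (hd s (le_of_lt hs)).differentiableAt.differentiableWithinAt
    · intro s hs
      rw [interior_Ici] at hs
      have hs1 : 1 ≤ s := le_of_lt hs
      rw [(hd s hs1).deriv]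
      have h1 := hFl s hs1
      have h2 := hEn s hs1
      have h3 := neg_le_abs (f s * g s)
      have : -(3/4) * (f s * g s) - F s / 2 ≤ 0 := by linarith
      exact mul_nonpos_of_nonpos_of_nonneg (div_nonpos_of_nonpos_of_nonneg this (by positivity))
        (Real.exp_pos _).le
  refine ⟨4 / 3 * P 1, fun s hs => ?_⟩
  have h1 := hanti (mem_Ici.2 le_rfl) (mem_Ici.2 hs) hs
  have h2 := hFl s hs
  have ha : 0 ≤ g s ^ 2 / √s := by positivity
  have hb : 0 ≤ √s * f s ^ 2 := by positivity
  have h3 : F s ≤ P s := by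
    have : 1 ≤ Real.exp (1 / (3 * √s ^ 3)) := Real.one_le_exp (by positivity)
    simp only [hP]
    nlinarith
  constructor <;> linarith

lemma Ai_neg_bounds : ∃ C : ℝ, 0 < C ∧ ∀ s : ℝ, 1 ≤ s →
    |Ai (-s)| ≤ C * s ^ (-(1:ℝ)/4) ∧ |deriv Ai (-s)| ≤ C * s ^ ((1:ℝ)/4) := by
  obtain ⟨A, hA⟩ := energy (fun s => Ai (-s)) (fun s => -deriv Ai (-s))
    (fun s => by
      have := (Ai_hd (-s)).comp s (hasDerivAt_neg s)
      simpa [Function.comp_def] using this)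
    (fun s => by
      have := ((dAi_hasDeriv (-s)).comp s (hasDerivAt_neg s)).neg
      exact this.congr_deriv (by ring))
  refine ⟨|A| + 1, by positivity, fun s hs => ?_⟩
  have hq : 0 < √s := Real.sqrt_pos.2 (by linarith)
  have hA2 : A ≤ (|A| + 1) ^ 2 := by nlinarith [le_abs_self A, abs_nonneg A]
  obtain ⟨h1, h2⟩ := hA s hs
  have hs0 : 0 ≤ s := by linarith
  have e1 : (s ^ ((1:ℝ)/4)) ^ 2 = √s := by
    rw [← Real.rpow_natCast, ← Real.rpow_mul hs0, Real.sqrt_eq_rpow]; norm_num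
  have e2 : (s ^ (-(1:ℝ)/4)) ^ 2 = (√s)⁻¹ := by
    rw [← Real.rpow_natCast, ← Real.rpow_mul hs0, Real.sqrt_eq_rpow, ← Real.rpow_neg hs0]; norm_num
  constructor
  · apply abs_le_of_sq_le_sq _ (by positivity)
    rw [mul_pow, e2, ← div_eq_mul_inv, le_div_iff₀ hq]
    linarith
  · apply abs_le_of_sq_le_sq _ (by positivity)
    rw [mul_pow, e1]
    rw [div_le_iff₀ hq, neg_sq] at h2
    exact h2.trans (by gcongr)

lemma Ai_bounds : ∃ C : ℝ, 0 < C ∧ ∀ y : ℝ, 1 ≤ |y| →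
    |Ai y| ≤ C * |y| ^ (-(1:ℝ)/4) ∧ |deriv Ai y| ≤ C * |y| ^ ((1:ℝ)/4) := by
  obtain ⟨C1, hC1, h1⟩ := Ai_pos_bounds
  obtain ⟨C2, hC2, h2⟩ := Ai_neg_bounds
  refine ⟨C1 + C2, by positivity, fun y hy => ?_⟩
  have ha : 0 ≤ |y| ^ (-(1:ℝ)/4) := by positivity
  have hb : 0 ≤ |y| ^ ((1:ℝ)/4) := by positivity
  rcases abs_cases y with h | h
  · have := h1 |y| hy
    rw [h.1] at this ha hb ⊢
    constructor <;> nlinarith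
  · have := h2 |y| hy
    rw [h.1, neg_neg] at this
    rw [h.1] at ha hb ⊢
    constructor <;> nlinarith

end AiryAux
namespace AiryAux

lemma tail_one (f g G : ℝ → ℝ) (R B : ℝ) (hR : 1 ≤ R) (hB : 0 ≤ B) (hf : Continuous f)
    (hG : ∀ u, R ≤ u → HasDerivAt G (g u) u) (hfg : ∀ u, R ≤ u → |f u - g u| ≤ B * u ^ (-(5:ℝ)/4))
    (hGB : ∀ u, R ≤ u → |G u| ≤ B) (y : ℝ) (hy : R ≤ y) : ∫ u in R..y, f u ≤ 6 * B := by
  set P : ℝ → ℝ := fun y => (∫ u in R..y, f u) - G y + 4 * B * y ^ (-(1:ℝ)/4) with hP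
  have hd : ∀ u, R ≤ u → HasDerivAt P (f u - g u - B * u ^ (-(5:ℝ)/4)) u := by
    intro u hu
    have h1 : HasDerivAt (fun y => ∫ u in R..y, f u) (f u) u :=
      intervalIntegral.integral_hasDerivAt_right (hf.intervalIntegrable _ _)
        (hf.stronglyMeasurableAtFilter _ _) hf.continuousAt
    have h2 := Real.hasDerivAt_rpow_const (x := u) (p := -(1:ℝ)/4) (Or.inl (by linarith))
    refine ((h1.sub (hG u hu)).add (h2.const_mul (4 * B))).congr_deriv ?_
    rw [show (-(1:ℝ)/4 - 1) = -(5:ℝ)/4 by norm_num]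
    ring
  have hanti : AntitoneOn P (Ici R) := by
    apply antitoneOn_of_deriv_nonpos (convex_Ici R)
    · exact fun s hs => (hd s hs).continuousAt.continuousWithinAt
    · intro s hs
      rw [interior_Ici] at hs
      exact (hd s (le_of_lt hs)).differentiableAt.differentiableWithinAt
    · intro s hs
      rw [interior_Ici] at hs
      have hs1 : R ≤ s := le_of_lt hs
      rw [(hd s hs1).deriv]
      have := (le_abs_self _).trans (hfg s hs1)
      linarith
  have h := hanti (mem_Ici.2 le_rfl) (mem_Ici.2 hy) hy
  simp only [hP, intervalIntegral.integral_same] at h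
  have h1 := (le_abs_self _).trans (hGB y hy)
  have h2 := (neg_le_abs _).trans (hGB R le_rfl)
  have h3 : R ^ (-(1:ℝ)/4) ≤ 1 := Real.rpow_le_one_of_one_le_of_nonpos hR (by norm_num)
  have h4 : 0 ≤ y ^ (-(1:ℝ)/4) := Real.rpow_nonneg (by linarith) _
  have h5 : B * R ^ (-(1:ℝ)/4) ≤ B := by nlinarith
  have h6 : 0 ≤ B * y ^ (-(1:ℝ)/4) := mul_nonneg hB h4
  linarith

lemma tail (f g G : ℝ → ℝ) (R B : ℝ) (hR : 1 ≤ R) (hB : 0 ≤ B) (hf : Continuous f)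
    (hG : ∀ u, R ≤ u → HasDerivAt G (g u) u) (hfg : ∀ u, R ≤ u → |f u - g u| ≤ B * u ^ (-(5:ℝ)/4))
    (hGB : ∀ u, R ≤ u → |G u| ≤ B) (y : ℝ) (hy : R ≤ y) : |∫ u in R..y, f u| ≤ 6 * B := by
  refine abs_le.2 ⟨?_, tail_one f g G R B hR hB hf hG hfg hGB y hy⟩
  have := tail_one (fun u => - f u) (fun u => - g u) (fun u => - G u) R B hR hB hf.neg
    (fun u hu => (hG u hu).neg)
    (fun u hu => by
      have := hfg u hu
      rwa [← abs_neg, show -(f u - g u) = -f u - -g u by ring] at this)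
    (fun u hu => by simpa using hGB u hu) y hy
  rw [intervalIntegral.integral_neg] at this
  linarith

lemma K_cont (x : ℝ) : Continuous fun u => KAi u x := by
  set g : ℝ → ℝ := fun u => Ai u * deriv Ai x - deriv Ai u * Ai x with hg
  have hd : ∀ u, HasDerivAt g (deriv Ai u * deriv Ai x - u * Ai u * Ai x) u := fun u =>
    ((Ai_hd u).mul_const _).sub ((dAi_hasDeriv u).mul_const _)
  have : (fun u => KAi u x) = dslope g x := by
    funext u
    by_cases h : u = x
    · subst h
      rw [dslope_same, (hd u).deriv]
      simp only [KAi, if_true]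
      ring
    · rw [dslope_of_ne _ h, slope_def_field]
      simp only [KAi, if_neg h, hg]
      ring
  rw [this, continuous_iff_continuousAt]
  intro u
  by_cases h : u = x
  · subst h
    exact continuousAt_dslope_same.2 (hd u).differentiableAt
  · exact (continuousAt_dslope_of_ne h).2 (hd u).continuousAt

lemma inv_bound (x y : ℝ) (hy : |x| + 1 ≤ |y|) : y ≠ x ∧ |x - y|⁻¹ ≤ (|x| + 1) / |y| := by
  have hx := abs_nonneg x
  have h1 : |y| - |x| ≤ |x - y| := by
    rw [abs_sub_comm]; exact abs_sub_abs_le_abs_sub y x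
  have hp : 0 < |x - y| := by linarith
  refine ⟨fun h => by subst h; linarith, ?_⟩
  rw [inv_eq_one_div, div_le_div_iff₀ hp (by linarith)]
  nlinarith

lemma frac_bound {n p d w D : ℝ} (hn : |n| ≤ p) (hd : |d|⁻¹ ≤ D / w) : |n / d| ≤ p * (D / w) := by
  rw [abs_div, div_eq_mul_inv]
  exact mul_le_mul hn hd (by positivity) ((abs_nonneg _).trans hn)

end AiryAux

open AiryAux
/-- bounds on the Airy kernel away from the diagonal, for fixed `x`. -/
theorem airy_kernel_bounds (x : ℝ) :
    (∃ M : ℝ, ∀ y : ℝ, |∫ u in x..y, KAi u x| ≤ M) ∧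
    (∃ C : ℝ, 0 < C ∧ ∀ y : ℝ, |x| + 1 ≤ |y| → |KAi x y| ≤ C * |y| ^ (-(3:ℝ)/4)) ∧
    (∃ C : ℝ, 0 < C ∧ ∀ y : ℝ, |x| + 1 ≤ |y| →
      |deriv (fun z => KAi x z) y| ≤ C * |y| ^ (-(1:ℝ)/4)) := by
  obtain ⟨C, hC, hb⟩ := Ai_bounds
  obtain ⟨a, ha⟩ : ∃ a, a = Ai x := ⟨_, rfl⟩
  obtain ⟨a', ha'⟩ : ∃ a', a' = deriv Ai x := ⟨_, rfl⟩
  obtain ⟨D, hD⟩ : ∃ D, D = |x| + 1 := ⟨_, rfl⟩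
  have hD1 : 1 ≤ D := by rw [hD]; linarith [abs_nonneg x]
  obtain ⟨A, hA⟩ : ∃ A, A = |a| + |a'| + 1 := ⟨_, rfl⟩
  have haA : |a| + |a'| ≤ A := by linarith
  have hA1 : 1 ≤ A := by linarith [abs_nonneg a, abs_nonneg a']
  have hpow : ∀ w : ℝ, 1 ≤ w → 0 < w ^ (-(1:ℝ)/4) ∧ w ^ (-(1:ℝ)/4) ≤ 1 ∧
      w ^ (-(1:ℝ)/4) ≤ w ^ ((1:ℝ)/4) ∧ w ^ ((1:ℝ)/4) ≤ w * w ^ (-(1:ℝ)/4) ∧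
      w ^ ((1:ℝ)/4) / w = w ^ (-(3:ℝ)/4) ∧ w ^ (-(1:ℝ)/4) / w = w ^ (-(5:ℝ)/4) := by
    intro w hw
    have hw0 : 0 < w := by linarith
    refine ⟨by positivity, Real.rpow_le_one_of_one_le_of_nonpos hw (by norm_num),
      Real.rpow_le_rpow_of_exponent_le hw (by norm_num), ?_, ?_, ?_⟩
    · rw [mul_comm, ← Real.rpow_add_one hw0.ne']
      exact Real.rpow_le_rpow_of_exponent_le hw (by norm_num)
    · rw [← Real.rpow_sub_one hw0.ne']; norm_num
    · rw [← Real.rpow_sub_one hw0.ne']; norm_num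
  have hnum : ∀ y : ℝ, 1 ≤ |y| → |a * deriv Ai y - a' * Ai y| ≤ A * C * |y| ^ ((1:ℝ)/4) := by
    intro y hy
    obtain ⟨b1, b2⟩ := hb y hy
    obtain ⟨p1, p2, p3, p4, p5, p6⟩ := hpow |y| hy
    have p7 : 0 < |y| ^ ((1:ℝ)/4) := p1.trans_le p3
    calc |a * deriv Ai y - a' * Ai y| ≤ |a| * |deriv Ai y| + |a'| * |Ai y| := by
          rw [← abs_mul, ← abs_mul]; exact abs_sub _ _
      _ ≤ |a| * (C * |y| ^ ((1:ℝ)/4)) + |a'| * (C * |y| ^ ((1:ℝ)/4)) := by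
          gcongr
          exact b1.trans (by gcongr)
      _ = (|a| + |a'|) * (C * |y| ^ ((1:ℝ)/4)) := by ring
      _ ≤ A * (C * |y| ^ ((1:ℝ)/4)) := by gcongr
      _ = _ := by ring
  refine ⟨?_, ⟨A * C * D, by positivity, ?_⟩, ⟨A * C * D + A * C * D * D, by positivity, ?_⟩⟩
  · skip
    have hK := K_cont x
    have hI : Continuous fun y => ∫ u in x..y, KAi u x :=
      intervalIntegral.continuous_primitive (fun _ _ => hK.intervalIntegrable _ _) x
    obtain ⟨M0, hM0⟩ := (isCompact_Icc (a := -D) (b := D)).exists_bound_of_continuousOn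
      hI.continuousOn
    simp only [Real.norm_eq_abs] at hM0
    set G : ℝ → ℝ := fun u => -a * Ai u / (u - x) with hG
    set g : ℝ → ℝ := fun u =>
      (-a * deriv Ai u * (u - x) - -a * Ai u * 1) / (u - x) ^ 2 with hg
    have hGd : ∀ u, D ≤ |u| → HasDerivAt G (g u) u := by
      intro u hu
      have hne := (inv_bound x u (hD ▸ hu)).1
      exact ((Ai_hd u).const_mul (-a)).div ((hasDerivAt_id u).sub_const x) (sub_ne_zero.2 hne)
    obtain ⟨B, hB⟩ : ∃ B, B = A * C * D + A * C * D * D := ⟨_, rfl⟩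
    have hB0 : 0 ≤ B := by rw [hB]; positivity
    have hGB : ∀ u, D ≤ |u| → |G u| ≤ B := by
      intro u hu
      have hu1 : 1 ≤ |u| := hD1.trans hu
      obtain ⟨b1, b2⟩ := hb u hu1
      obtain ⟨p1, p2, p3, p4, p5, p6⟩ := hpow |u| hu1
      have hi := (inv_bound x u (hD ▸ hu)).2
      rw [abs_sub_comm, ← hD] at hi
      have h1 : |-a * Ai u| ≤ A * C := by
        rw [abs_mul, abs_neg]
        have : |Ai u| ≤ C := b1.trans (by nlinarith)
        gcongr
        linarith [abs_nonneg a']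
      have h2 := frac_bound h1 hi
      refine h2.trans ?_
      have : D / |u| ≤ D := div_le_self (by linarith) hu1
      rw [hB]
      have : A * C * (D / |u|) ≤ A * C * D := by gcongr
      have : 0 ≤ A * C * D * D := by positivity
      linarith
    have hfg : ∀ u, D ≤ |u| → |KAi u x - g u| ≤ B * |u| ^ (-(5:ℝ)/4) := by
      intro u hu
      have hu1 : 1 ≤ |u| := hD1.trans hu
      obtain ⟨b1, b2⟩ := hb u hu1
      obtain ⟨p1, p2, p3, p4, p5, p6⟩ := hpow |u| hu1
      obtain ⟨hne, hi⟩ := inv_bound x u (hD ▸ hu)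
      rw [abs_sub_comm, ← hD] at hi
      have hs : u - x ≠ 0 := sub_ne_zero.2 hne
      have e : KAi u x - g u = a' * Ai u / (u - x) + (-a * Ai u) / (u - x) / (u - x) := by
        simp only [KAi, if_neg hne, hg, ← ha, ← ha']
        field_simp
        ring
      have h1 : |a' * Ai u| ≤ A * C * |u| ^ (-(1:ℝ)/4) := by
        rw [abs_mul, mul_assoc]
        gcongr
        linarith [abs_nonneg a]
      have h2 : |-a * Ai u| ≤ A * C * |u| ^ (-(1:ℝ)/4) := by
        rw [abs_mul, abs_neg, mul_assoc]
        gcongr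
        linarith [abs_nonneg a']
      have h3 := frac_bound h1 hi
      have h4 := frac_bound (frac_bound h2 hi) hi
      have h5 : D / |u| ≤ D := div_le_self (by linarith) hu1
      rw [e]
      refine (abs_add_le _ _).trans ((add_le_add h3 h4).trans ?_)
      rw [← p6, hB]
      have h6 : A * C * |u| ^ (-(1:ℝ)/4) * (D / |u|) * (D / |u|)
          ≤ A * C * |u| ^ (-(1:ℝ)/4) * (D / |u|) * D := by gcongr
      refine (add_le_add_right h6 _).trans (le_of_eq ?_)
      ring
    refine ⟨M0 + 6 * B, fun y => ?_⟩
    have hDm : D ∈ Icc (-D) D := ⟨by linarith, le_rfl⟩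
    have hDm' : -D ∈ Icc (-D) D := ⟨le_rfl, by linarith⟩
    rcases le_total D y with h | h
    · rw [← intervalIntegral.integral_add_adjacent_intervals
        (hK.intervalIntegrable x D) (hK.intervalIntegrable D y)]
      refine (abs_add_le _ _).trans (add_le_add (hM0 D hDm) ?_)
      refine tail _ g G D B hD1 hB0 hK (fun u hu => hGd u (hu.trans (le_abs_self u)))
        (fun u hu => ?_) (fun u hu => hGB u (hu.trans (le_abs_self u))) y h
      have := hfg u (hu.trans (le_abs_self u))
      rwa [abs_of_nonneg (show 0 ≤ u by linarith)] at this
    · rcases le_total (-D) y with h' | h'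
      · have := hM0 y ⟨h', h⟩
        linarith
      · rw [← intervalIntegral.integral_add_adjacent_intervals
          (hK.intervalIntegrable x (-D)) (hK.intervalIntegrable (-D) y)]
        refine (abs_add_le _ _).trans (add_le_add (hM0 (-D) hDm') ?_)
        have hab : ∀ u, D ≤ u → D ≤ |-u| := fun u hu => by
          rw [abs_neg]; exact hu.trans (le_abs_self u)
        have := tail (fun u => KAi (-u) x) (fun u => g (-u)) (fun u => -G (-u)) D B hD1 hB0
          (hK.comp continuous_neg)
          (fun u hu => (((hGd (-u) (hab u hu)).comp u (hasDerivAt_neg u)).neg).congr_deriv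
            (by ring))
          (fun u hu => by
            have := hfg (-u) (hab u hu)
            rwa [abs_neg u, abs_of_nonneg (show 0 ≤ u by linarith)] at this)
          (fun u hu => by
            rw [abs_neg]; exact hGB (-u) (hab u hu)) (-y) (by linarith)
        rw [intervalIntegral.integral_comp_neg (fun u => KAi u x), neg_neg] at this
        rw [intervalIntegral.integral_symm, abs_neg]
        exact this
  · skip
    intro y hy
    obtain ⟨hne, hi⟩ := inv_bound x y hy
    rw [← hD] at hi hy
    have hy1 : 1 ≤ |y| := hD1.trans hy
    obtain ⟨p1, p2, p3, p4, p5, p6⟩ := hpow |y| hy1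
    have h := frac_bound (hnum y hy1) hi
    simp only [KAi, if_neg hne.symm, ← ha, ← ha']
    refine h.trans (le_of_eq ?_)
    rw [← p5]
    ring
  · skip
    intro y hy
    obtain ⟨hne, hi⟩ := inv_bound x y hy
    rw [← hD] at hi hy
    have hy1 : 1 ≤ |y| := hD1.trans hy
    obtain ⟨b1, b2⟩ := hb y hy1
    obtain ⟨p1, p2, p3, p4, p5, p6⟩ := hpow |y| hy1
    have hs : x - y ≠ 0 := sub_ne_zero.2 hne.symm
    have hd : HasDerivAt (fun z => (a * deriv Ai z - a' * Ai z) / (x - z))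
        ((a * (y * Ai y) - a' * deriv Ai y) / (x - y)
          + (a * deriv Ai y - a' * Ai y) / (x - y) / (x - y)) y := by
      refine ((((dAi_hasDeriv y).const_mul a).sub ((Ai_hd y).const_mul a')).div
        ((hasDerivAt_id y).const_sub x) hs).congr_deriv ?_
      simp only [id, Pi.sub_apply]
      field_simp
      ring
    have hev : (fun z => KAi x z) =ᶠ[nhds y] fun z => (a * deriv Ai z - a' * Ai z) / (x - z) := by
      filter_upwards [isOpen_ne.mem_nhds hne] with z hz
      simp only [KAi, if_neg (Ne.symm hz), ha, ha']
    rw [(hd.congr_of_eventuallyEq hev).deriv]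
    have hw0 : 0 < |y| := by linarith
    have h1 : |a * (y * Ai y) - a' * deriv Ai y| ≤ A * C * (|y| * |y| ^ (-(1:ℝ)/4)) := by
      calc |a * (y * Ai y) - a' * deriv Ai y| ≤ |a| * (|y| * |Ai y|) + |a'| * |deriv Ai y| := by
            rw [← abs_mul, ← abs_mul, ← abs_mul]; exact abs_sub _ _
        _ ≤ |a| * (|y| * (C * |y| ^ (-(1:ℝ)/4))) + |a'| * (C * (|y| * |y| ^ (-(1:ℝ)/4))) := by
            gcongr
            exact b2.trans (by gcongr)
        _ = (|a| + |a'|) * (C * (|y| * |y| ^ (-(1:ℝ)/4))) := by ring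
        _ ≤ A * (C * (|y| * |y| ^ (-(1:ℝ)/4))) := by gcongr
        _ = _ := by ring
    have h2 : |a * deriv Ai y - a' * Ai y| ≤ A * C * (|y| * |y| ^ (-(1:ℝ)/4)) :=
      (hnum y hy1).trans (by gcongr)
    have h3 := frac_bound h1 hi
    have h4 := frac_bound (frac_bound h2 hi) hi
    have h5 : D / |y| ≤ D := div_le_self (by linarith) hy1
    have e : A * C * (|y| * |y| ^ (-(1:ℝ)/4)) * (D / |y|) = A * C * D * |y| ^ (-(1:ℝ)/4) := by
      field_simp
    rw [e] at h3 h4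
    have h6 : A * C * D * |y| ^ (-(1:ℝ)/4) * (D / |y|) ≤ A * C * D * |y| ^ (-(1:ℝ)/4) * D := by
      gcongr
    refine (abs_add_le _ _).trans ((add_le_add h3 (h4.trans h6)).trans (le_of_eq ?_))
    ring
end

section
/- For every even integer n ≥ 2 and all x, y ∈ ℝ: (i) ∂₂J₁ⁿ(x,y) = −∂₂J₁ⁿ(y,x), where ∂₂J₁ⁿ denotes the derivative of J₁ⁿ in its second variable; (ii) ∫_y^x J₁ⁿ(u,y) du = −∫_x^y J₁ⁿ(u,x) du. -/
open MeasureTheory Filter Set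

namespace AntisymAux

/-- Hermite function without normalization. -/
noncomputable def hF (k : ℕ) (s : ℝ) : ℝ :=
  Real.exp (-s ^ 2 / 4) * Polynomial.aeval s (Polynomial.hermite k)

theorem derivative_hermite_succ (k : ℕ) :
    Polynomial.derivative (Polynomial.hermite (k + 1)) =
      ((k : Polynomial ℤ) + 1) * Polynomial.hermite k := by
  induction k with
  | zero => simp [Polynomial.hermite_succ]
  | succ k ih =>
    rw [Polynomial.hermite_succ (k + 1)]
    simp only [Polynomial.derivative_sub, Polynomial.derivative_mul, Polynomial.derivative_X, ih]
    have h2 : Polynomial.derivative (((k : Polynomial ℤ) + 1)) = 0 := by simp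
    rw [h2, Polynomial.hermite_succ k]
    push_cast
    ring

theorem hermiteP_eq (k : ℕ) (s : ℝ) :
    hermiteP k s = Polynomial.aeval s (Polynomial.hermite k) := by
  rw [Polynomial.hermite_eq_deriv_gaussian', hermiteP, iteratedDeriv_eq_iterate]
  have : (fun t : ℝ => Real.exp (-t ^ 2 / 2)) = fun t : ℝ => Real.exp (-(t ^ 2 / 2)) := by
    ext t; ring_nf
  rw [this]; ring

theorem hF_rec (k : ℕ) (s : ℝ) : hF (k + 2) s = s * hF (k + 1) s - (k + 1) * hF k s := by
  unfold hF
  rw [Polynomial.hermite_succ (k + 1), derivative_hermite_succ]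
  simp
  ring

theorem hF_hasDeriv (k : ℕ) (s : ℝ) : HasDerivAt (hF k) (s / 2 * hF k s - hF (k + 1) s) s := by
  have h1 : HasDerivAt (fun s : ℝ => Real.exp (-s ^ 2 / 4)) (Real.exp (-s ^ 2 / 4) * (-s / 2)) s := by
    apply HasDerivAt.exp
    refine ((hasDerivAt_pow 2 s).neg.div_const 4).congr_deriv ?_
    norm_num
    ring
  have h2 := Polynomial.hasDerivAt_aeval (Polynomial.hermite k) s
  refine (h1.mul h2).congr_deriv ?_
  unfold hF
  rw [Polynomial.hermite_succ k]
  simp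
  ring

theorem hF_hasDeriv_succ (k : ℕ) (s : ℝ) :
    HasDerivAt (hF (k + 1)) ((k + 1) * hF k s - s / 2 * hF (k + 1) s) s := by
  convert hF_hasDeriv (k + 1) s using 1
  rw [hF_rec]; ring

theorem hF_cont (k : ℕ) : Continuous (hF k) :=
  continuous_iff_continuousAt.2 fun s => (hF_hasDeriv k s).continuousAt

theorem hF_integrable (k : ℕ) : Integrable (hF k) := by
  have hmon : ∀ j : ℕ, Integrable (fun s : ℝ => Real.exp (-s ^ 2 / 4) * s ^ j) := by
    intro j
    have := integrable_rpow_mul_exp_neg_mul_sq (b := 1 / 4) (by norm_num) (s := (j : ℝ))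
      (by have : (0 : ℝ) ≤ j := Nat.cast_nonneg j
          linarith)
    refine this.congr (Eventually.of_forall fun s => ?_)
    simp only [Real.rpow_natCast]
    rw [mul_comm]
    ring_nf
  unfold hF
  simp only [Polynomial.aeval_eq_sum_range, Finset.mul_sum]
  refine integrable_finsetSum _ fun j _ => ?_
  refine ((hmon j).const_mul ((Polynomial.hermite k).coeff j : ℝ)).congr
    (Eventually.of_forall fun s => ?_)
  simp
  ring

theorem cd (m : ℕ) (s t : ℝ) :
    (s - t) * ∑ k ∈ Finset.range (m + 1), hF k s * hF k t / (k.factorial : ℝ) =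
      (hF (m + 1) s * hF m t - hF m s * hF (m + 1) t) / (m.factorial : ℝ) := by
  induction m with
  | zero => simp [hF]; ring
  | succ m ih =>
    rw [Finset.sum_range_succ, mul_add, ih, hF_rec, hF_rec, Nat.factorial_succ]
    have := Nat.factorial_ne_zero m
    push_cast
    have h1 : (m : ℝ) + 1 ≠ 0 := by positivity
    field_simp
    ring

theorem cd_diag (m : ℕ) (s : ℝ) :
    ∑ k ∈ Finset.range (m + 1), hF k s * hF k s / (k.factorial : ℝ) =
      (((m + 1) * hF m s - s / 2 * hF (m + 1) s) * hF m s
        - (s / 2 * hF m s - hF (m + 1) s) * hF (m + 1) s) / (m.factorial : ℝ) := by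
  induction m with
  | zero => simp [hF]; ring
  | succ m ih =>
    rw [Finset.sum_range_succ, ih, hF_rec, Nat.factorial_succ]
    have := Nat.factorial_ne_zero m
    push_cast
    have h1 : (m : ℝ) + 1 ≠ 0 := by positivity
    field_simp
    ring

theorem sum_deriv (m : ℕ) (s t : ℝ) :
    ∑ k ∈ Finset.range (m + 1), (hF k s * (t / 2 * hF k t - hF (k + 1) t)
        + hF k t * (s / 2 * hF k s - hF (k + 1) s)) / (k.factorial : ℝ) =
      -(1 / 2) * (hF (m + 1) s * hF m t + hF m s * hF (m + 1) t) / (m.factorial : ℝ) := by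
  induction m with
  | zero => simp [hF]; ring
  | succ m ih =>
    rw [Finset.sum_range_succ, ih, hF_rec, hF_rec, Nat.factorial_succ]
    have := Nat.factorial_ne_zero m
    push_cast
    have h1 : (m : ℝ) + 1 ≠ 0 := by positivity
    field_simp
    ring

/-- Derivative of the epsilon transform. -/
theorem eps_hasDeriv (f : ℝ → ℝ) (hf : Integrable f) (hc : Continuous f) (x : ℝ) :
    HasDerivAt (epsF f) (f x) x := by
  have key : ∀ x, epsF f x = (∫ y in Iic (0 : ℝ), f y) + (∫ y in (0 : ℝ)..x, f y)
      - (1 / 2) * ∫ y, f y := by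
    intro x
    have e1 : (∫ y, Real.sign (x - y) * f y) = (∫ y in Iic x, f y) - ∫ y in Ioi x, f y := by
      have hinteg : Integrable (fun y => Real.sign (x - y) * f y) := by
        refine hf.bdd_mul (c := 1) ?_ (Eventually.of_forall fun y => ?_)
        · have : Measurable Real.sign := by
            unfold Real.sign
            exact Measurable.ite measurableSet_Iio measurable_const
              (Measurable.ite measurableSet_Ioi measurable_const measurable_const)
          exact (this.comp (measurable_const.sub measurable_id)).aestronglyMeasurable
        · rcases Real.sign_apply_eq (x - y) with h | h | h <;> rw [h] <;> simp
      rw [← intervalIntegral.integral_Iic_add_Ioi (b := x) hinteg.integrableOn hinteg.integrableOn]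
      have a1 : (∫ y in Iic x, Real.sign (x - y) * f y) = ∫ y in Iic x, f y := by
        rw [integral_Iic_eq_integral_Iio, integral_Iic_eq_integral_Iio]
        refine setIntegral_congr_fun measurableSet_Iio fun y hy => ?_
        have : 0 < x - y := sub_pos.2 hy
        simp [Real.sign_of_pos this]
      have a2 : (∫ y in Ioi x, Real.sign (x - y) * f y) = - ∫ y in Ioi x, f y := by
        rw [← integral_neg]
        refine setIntegral_congr_fun measurableSet_Ioi fun y hy => ?_
        have : x - y < 0 := sub_neg.2 hy
        simp [Real.sign_of_neg this]
      rw [a1, a2]; ring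
    have e2 := intervalIntegral.integral_Iic_add_Ioi (b := x) hf.integrableOn hf.integrableOn
    have e3 := intervalIntegral.integral_Iic_sub_Iic (a := 0) (b := x) (μ := volume) (f := f)
      hf.integrableOn hf.integrableOn
    rw [epsF, e1]
    linarith
  have : epsF f = fun x => (∫ y in Iic (0 : ℝ), f y) + (∫ y in (0 : ℝ)..x, f y)
      - (1 / 2) * ∫ y, f y := funext key
  rw [this]
  exact ((hc.integral_hasStrictDerivAt 0 x).hasDerivAt.const_add _).sub_const _

/-- Abstract antisymmetry of the integrated kernel. -/
theorem abstract_int (N : ℕ) (a b b' : ℕ → ℝ → ℝ) (ha : ∀ k, Continuous (a k))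
    (hb : ∀ k x, HasDerivAt (b k) (b' k x) x)
    (hanti : ∀ x y, ∑ k ∈ Finset.range N, (a k x * b' k y + a k y * b' k x) = 0) (x y : ℝ) :
    (∫ u in y..x, ∑ k ∈ Finset.range N, a k u * b k y) =
      - ∫ u in x..y, ∑ k ∈ Finset.range N, a k u * b k x := by
  set A : ℕ → ℝ → ℝ := fun k x => ∫ u in (0 : ℝ)..x, a k u with hA
  have hAd : ∀ k x, HasDerivAt (A k) (a k x) x := fun k x =>
    ((ha k).integral_hasStrictDerivAt 0 x).hasDerivAt
  have hF : ∀ x y, (∫ u in y..x, ∑ k ∈ Finset.range N, a k u * b k y) =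
      ∑ k ∈ Finset.range N, (A k x - A k y) * b k y := by
    intro x y
    have hi : ∀ k ∈ Finset.range N, IntervalIntegrable (fun u => a k u * b k y) volume y x :=
      fun k _ => ((ha k).mul continuous_const).intervalIntegrable _ _
    rw [intervalIntegral.integral_finsetSum hi]
    refine Finset.sum_congr rfl fun k _ => ?_
    rw [intervalIntegral.integral_mul_const]
    congr 1
    exact (intervalIntegral.integral_interval_sub_left ((ha k).intervalIntegrable _ _)
      ((ha k).intervalIntegrable _ _)).symm
  rw [hF, hF]
  have hD : ∀ x y, ∑ k ∈ Finset.range N,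
      (a k x * b k y + ((A k y - A k x) * b' k x - a k x * b k x)) = 0 := by
    intro x y
    have hd : ∀ y, HasDerivAt (fun y => ∑ k ∈ Finset.range N,
      (a k x * b k y + ((A k y - A k x) * b' k x - a k x * b k x))) 0 y := by
      intro y
      rw [← hanti x y]
      refine HasDerivAt.fun_sum fun k _ => ?_
      exact ((hb k y).const_mul _).add
        ((((hAd k y).sub_const _).mul_const _).sub_const _)
    have := is_const_of_deriv_eq_zero (fun y => (hd y).differentiableAt)
      (fun y => (hd y).deriv) y x
    simpa using this
  have hd : ∀ x, HasDerivAt (fun x => ∑ k ∈ Finset.range N,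
      ((A k x - A k y) * b k y + (A k y - A k x) * b k x)) 0 x := by
    intro x
    rw [← hD x y]
    refine HasDerivAt.fun_sum fun k _ => ?_
    have h := (((hAd k x).sub_const (A k y)).mul_const (b k y)).add
        (((hAd k x).const_sub (A k y)).mul (hb k x))
    refine h.congr_deriv ?_
    ring
  have := is_const_of_deriv_eq_zero (fun y => (hd y).differentiableAt)
      (fun y => (hd y).deriv) x y
  simp only [sub_self, zero_mul, add_zero, Finset.sum_const_zero, Finset.sum_add_distrib] at this
  linarith

/-- Normalization constants. -/
noncomputable def cN (k : ℕ) : ℝ := (2 * Real.pi) ^ (-(1:ℝ)/4) * ((k.factorial : ℝ)) ^ (-(1:ℝ)/2)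

theorem osc_eq (k : ℕ) (s : ℝ) : osc k s = cN k * hF k s := by
  rw [osc, hermiteP_eq, cN, hF]; ring

theorem cN_sq (k : ℕ) : cN k ^ 2 = (2 * Real.pi) ^ (-(1:ℝ)/2) / (k.factorial : ℝ) := by
  have hpi : (0:ℝ) ≤ 2 * Real.pi := by positivity
  have hk : (0:ℝ) ≤ (k.factorial : ℝ) := by positivity
  rw [cN, mul_pow, ← Real.rpow_mul_natCast hpi, ← Real.rpow_mul_natCast hk, div_eq_mul_inv _ (k.factorial : ℝ),
    ← Real.rpow_neg_one (k.factorial : ℝ)]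
  norm_num

theorem cN_mul (m : ℕ) : cN m * cN (m + 1) =
    (2 * Real.pi) ^ (-(1:ℝ)/2) / (m.factorial : ℝ) * ((m + 1 : ℕ) : ℝ) ^ (-(1:ℝ)/2) := by
  rw [← cN_sq, cN, cN, Nat.factorial_succ, Nat.cast_mul,
    Real.mul_rpow (x := ((m + 1 : ℕ) : ℝ)) (by positivity) (by positivity)]
  ring

theorem psiUp_eq (n m : ℕ) (x : ℝ) : psiUp n m x = (n : ℝ) ^ ((1:ℝ)/12) * cN m *
    hF m (2 * Real.sqrt n + (n : ℝ) ^ (-(1:ℝ)/6) * x) := by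
  rw [psiUp, osc_eq]; ring

/-- Everything about the kernel with the constants abstracted. -/
theorem main_aux (m : ℕ) : ∃ (r q : ℝ) (C : ℝ),
    (∀ x y, KAiN (m + 1) x y = ∑ k ∈ Finset.range (m + 1),
      (r * C / (k.factorial : ℝ) * hF k (q + r * x)) * hF k (q + r * y)) ∧
    (∀ x y, psiUp (m + 1) m x * psiN (m + 1) y =
      r ^ 2 * C / (m.factorial : ℝ) * (hF m (q + r * x) * hF (m + 1) (q + r * y))) ∧
    Continuous (psiUp (m + 1) m) ∧ Continuous (psiN (m + 1)) ∧ Integrable (psiN (m + 1)) := by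
  have hN : (0 : ℝ) < ((m + 1 : ℕ) : ℝ) := by positivity
  obtain ⟨r, hr⟩ : ∃ r, r = ((m + 1 : ℕ) : ℝ) ^ (-(1:ℝ)/6) := ⟨_, rfl⟩
  obtain ⟨A, hA⟩ : ∃ r, r = ((m + 1 : ℕ) : ℝ) ^ ((1:ℝ)/12) := ⟨_, rfl⟩
  obtain ⟨q, hq⟩ : ∃ q, q = 2 * Real.sqrt ((m + 1 : ℕ) : ℝ) := ⟨_, rfl⟩
  obtain ⟨C, hC⟩ : ∃ C, C = (2 * Real.pi) ^ (-(1:ℝ)/2) := ⟨_, rfl⟩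
  have hr0 : 0 < r := hr ▸ Real.rpow_pos_of_pos hN _
  have hA2 : A ^ 2 * r = 1 := by
    rw [hA, hr, ← Real.rpow_mul_natCast hN.le, ← Real.rpow_add hN]
    norm_num
  have hthird : ((m + 1 : ℕ) : ℝ) ^ ((1:ℝ)/3) * r ^ 2 = 1 := by
    rw [hr, ← Real.rpow_mul_natCast hN.le, ← Real.rpow_add hN]
    norm_num
  have hr3 : ((m + 1 : ℕ) : ℝ) ^ (-(1:ℝ)/2) = r ^ 3 := by
    rw [hr, ← Real.rpow_mul_natCast hN.le]
    norm_num
  have hinv : 1 / (2 * ((m + 1 : ℕ) : ℝ) ^ ((1:ℝ)/3)) = r ^ 2 / 2 := by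
    have : ((m + 1 : ℕ) : ℝ) ^ ((1:ℝ)/3) ≠ 0 := (Real.rpow_pos_of_pos hN _).ne'
    field_simp
    linarith
  have hpsi : ∀ k, psiUp (m + 1) k = fun x => A * cN k * hF k (q + r * x) := by
    intro k; funext x; rw [psiUp_eq, hr, hA, hq]
  have hlin : ∀ x, HasDerivAt (fun x : ℝ => q + r * x) r x := fun x => by
    simpa using ((hasDerivAt_id x).const_mul r).const_add q
  have hcomp : ∀ k, Continuous (fun x : ℝ => hF k (q + r * x)) := fun k =>
    (hF_cont k).comp (by fun_prop)
  set c := cN (m + 1) with hc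
  have hc2 : c ^ 2 * ((m + 1) * (m.factorial : ℝ)) = C := by
    have h := cN_sq (m + 1)
    rw [← hC, Nat.factorial_succ] at h
    rw [hc, h]
    have := Nat.factorial_ne_zero m
    push_cast
    have h1 : (m : ℝ) + 1 ≠ 0 := by positivity
    field_simp
  have hcm : cN m * c = C / (m.factorial : ℝ) * r ^ 3 := by
    rw [hc, cN_mul, hr3, hC]
  have hp : ∀ x, psiN (m + 1) x = A * c * hF (m + 1) (q + r * x) := fun x => by
    rw [psiN, hpsi]
  have hp' : psiN (m + 1) = fun x => A * c * hF (m + 1) (q + r * x) := funext hp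
  have hd1 : deriv (psiN (m + 1)) = fun x => A * c * r *
      ((m + 1) * hF m (q + r * x) - (q + r * x) / 2 * hF (m + 1) (q + r * x)) := by
    funext x
    rw [hp']
    have := ((hF_hasDeriv_succ m (q + r * x)).comp x (hlin x)).const_mul (A * c)
    refine (this.congr_deriv ?_).deriv
    ring
  have hd2 : ∀ x, deriv (deriv (psiN (m + 1))) x = A * c * r ^ 2 *
      ((m + 1) * ((q + r * x) / 2 * hF m (q + r * x) - hF (m + 1) (q + r * x))
        - (1 / 2 * hF (m + 1) (q + r * x) + (q + r * x) / 2 *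
          ((m + 1) * hF m (q + r * x) - (q + r * x) / 2 * hF (m + 1) (q + r * x)))) := by
    intro x
    rw [hd1]
    have e1 := ((hF_hasDeriv m (q + r * x)).comp x (hlin x)).const_mul ((m : ℝ) + 1)
    have e2 := ((hlin x).div_const 2).mul ((hF_hasDeriv_succ m (q + r * x)).comp x (hlin x))
    have e3 := (e1.sub e2).const_mul (A * c * r)
    refine (e3.congr_deriv ?_).deriv
    simp only [Function.comp]
    ring
  refine ⟨r, q, C, ?_, ?_, ?_, ?_, ?_⟩
  · intro x y
    have hsum : ∑ k ∈ Finset.range (m + 1),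
        (r * C / (k.factorial : ℝ) * hF k (q + r * x)) * hF k (q + r * y) =
        r * C * ∑ k ∈ Finset.range (m + 1),
          hF k (q + r * x) * hF k (q + r * y) / (k.factorial : ℝ) := by
      rw [Finset.mul_sum]
      exact Finset.sum_congr rfl fun k _ => by ring
    have hm := Nat.factorial_ne_zero m
    have hm' : (m.factorial : ℝ) ≠ 0 := by exact_mod_cast hm
    rw [hsum, KAiN]
    split_ifs with hxy
    · subst hxy
      rw [cd_diag, hinv, hd2, hd1, hp, ← hc2]
      beta_reduce
      generalize hF (m + 1) (q + r * x) = u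
      generalize hF m (q + r * x) = v
      generalize q + r * x = s
      simp only [mul_pow]
      field_simp
      linear_combination (c ^ 2 * 4 * (m + 1) * (u ^ 2 - u * s * v + (m + 1) * v ^ 2)) * hA2
    · have hxy' : x - y ≠ 0 := sub_ne_zero.2 hxy
      have hcd := cd m (q + r * x) (q + r * y)
      have e : (q + r * x) - (q + r * y) = r * (x - y) := by ring
      rw [e] at hcd
      have hcd2 : ∑ k ∈ Finset.range (m + 1),
          hF k (q + r * x) * hF k (q + r * y) / (k.factorial : ℝ) =
          (hF (m + 1) (q + r * x) * hF m (q + r * y) - hF m (q + r * x) * hF (m + 1) (q + r * y))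
            / (m.factorial : ℝ) / (r * (x - y)) := by
        rw [← hcd]; field_simp
      rw [hcd2, hinv, hd1, hp, hp, ← hc2]
      beta_reduce
      generalize hF (m + 1) (q + r * x) = u
      generalize hF m (q + r * x) = v
      generalize hF (m + 1) (q + r * y) = u'
      generalize hF m (q + r * y) = v'
      field_simp
      linear_combination (2 * c ^ 2 * (m + 1) * (u * v' - v * u')) * hA2
  · intro x y
    rw [hp, hpsi]
    have : A ^ 2 * r ^ 3 = r ^ 2 := by linear_combination r ^ 2 * hA2
    rw [← this]
    linear_combination (A ^ 2 * hF m (q + r * x) * hF (m + 1) (q + r * y)) * hcm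
  · rw [hpsi]; exact continuous_const.mul (hcomp m)
  · rw [hp']; exact continuous_const.mul (hcomp _)
  · rw [hp']
    refine Integrable.const_mul ?_ _
    have := ((hF_integrable (m + 1)).comp_add_left q).comp_mul_left' hr0.ne'
    exact this

end AntisymAux

/-- antisymmetry relations for the finite-`n` kernel `J₁ⁿ` (`n` even). -/
theorem J1N_antisymmetry (n : ℕ) (hn : 2 ≤ n) (hev : Even n) (x y : ℝ) :
    deriv (fun v => J1N n x v) y = - deriv (fun v => J1N n y v) x ∧
    (∫ u in y..x, J1N n u y) = - ∫ u in x..y, J1N n u x := by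
  obtain ⟨m, rfl⟩ : ∃ m, n = m + 1 := ⟨n - 1, by omega⟩
  obtain ⟨r, q, C, hK, hprod, hc1, hc2, hinteg⟩ := AntisymAux.main_aux m
  have heps : ∀ x, HasDerivAt (epsPsi (m + 1)) (psiN (m + 1) x) x :=
    AntisymAux.eps_hasDeriv _ hinteg hc2
  set a : ℕ → ℝ → ℝ := fun k x => if k < m + 1 then
    r * C / (k.factorial : ℝ) * AntisymAux.hF k (q + r * x) else
    (1 / 2) * psiUp (m + 1) m x with ha
  set b : ℕ → ℝ → ℝ := fun k x => if k < m + 1 then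
    AntisymAux.hF k (q + r * x) else epsPsi (m + 1) x with hb
  set b' : ℕ → ℝ → ℝ := fun k x => if k < m + 1 then
    r * ((q + r * x) / 2 * AntisymAux.hF k (q + r * x) - AntisymAux.hF (k + 1) (q + r * x))
    else psiN (m + 1) x with hb'
  have hJ : ∀ x y, J1N (m + 1) x y = ∑ k ∈ Finset.range (m + 1 + 1), a k x * b k y := by
    intro x y
    rw [Finset.sum_range_succ, J1N, hK]
    congr 1
    · refine Finset.sum_congr rfl fun k hk => ?_
      simp only [ha, hb, Finset.mem_range.1 hk, if_true]
    · simp [ha, hb]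
  have hacont : ∀ k, Continuous (a k) := by
    intro k
    by_cases hk : k < m + 1
    · simp only [ha, hk, if_true]
      exact continuous_const.mul ((AntisymAux.hF_cont k).comp (by fun_prop))
    · simp only [ha, hk, if_false]
      exact continuous_const.mul hc1
  have hbd : ∀ k x, HasDerivAt (b k) (b' k x) x := by
    intro k x
    have hlin : HasDerivAt (fun x : ℝ => q + r * x) r x := by
      simpa using ((hasDerivAt_id x).const_mul r).const_add q
    by_cases hk : k < m + 1
    · simp only [hb, hb', hk, if_true]
      have := (AntisymAux.hF_hasDeriv k (q + r * x)).comp x hlin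
      refine this.congr_deriv ?_
      ring
    · simp only [hb, hb', hk, if_false]
      exact heps x
  have hanti : ∀ x y, ∑ k ∈ Finset.range (m + 1 + 1), (a k x * b' k y + a k y * b' k x) = 0 := by
    intro x y
    rw [Finset.sum_range_succ]
    have h1 : ∑ k ∈ Finset.range (m + 1), (a k x * b' k y + a k y * b' k x) =
        r ^ 2 * C * (-(1 / 2) * (AntisymAux.hF (m + 1) (q + r * x) * AntisymAux.hF m (q + r * y)
          + AntisymAux.hF m (q + r * x) * AntisymAux.hF (m + 1) (q + r * y))
            / (m.factorial : ℝ)) := by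
      rw [← AntisymAux.sum_deriv, Finset.mul_sum]
      refine Finset.sum_congr rfl fun k hk => ?_
      simp only [ha, hb', Finset.mem_range.1 hk, if_true]
      ring
    rw [h1]
    simp only [ha, hb', lt_irrefl, if_false]
    linear_combination (1 / 2) * hprod x y + (1 / 2) * hprod y x
  have hder : ∀ x y, deriv (fun v => J1N (m + 1) x v) y =
      ∑ k ∈ Finset.range (m + 1 + 1), a k x * b' k y := by
    intro x y
    simp only [hJ]
    exact (HasDerivAt.fun_sum fun k _ => (hbd k y).const_mul (a k x)).deriv
  constructor
  · rw [hder, hder]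
    have := hanti x y
    rw [Finset.sum_add_distrib] at this
    linarith
  · simp only [hJ]
    exact AntisymAux.abstract_int _ a b b' hacont hbd hanti x y
end

section
/- There is C > 0 such that for every integer n ≥ 1 and every x ∈ [−2·n^{2/3}, ∞): |ψ_n(x)| ≤ C·max(|x|,1)^{−1/4}, |ψ_n'(x)| ≤ C·max(|x|,1)^{1/4}, and |ψ_n''(x)| ≤ C·max(|x|,1)^{3/4}. -/
open MeasureTheory Filter Set

/-- Phase 1: WKB energy in the oscillatory region. -/
lemma psiAux_phase1 (s x0 : ℝ) (hs : 0 < s) (hs1 : s ≤ 1) (hx0 : x0 * s ^ 2 = -2)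
    (u v : ℝ → ℝ) (hu : ∀ x, HasDerivAt u (v x) x)
    (hv : ∀ x, HasDerivAt v ((x + s ^ 2 * x ^ 2 / 4 - s / 2) * u x) x)
    (h0 : u x0 ^ 2 ≤ s) (h1 : v x0 ^ 2 ≤ 1 / s) (x : ℝ) (hx : x0 ≤ x) (hx2 : x ≤ -2) :
    ∃ r : ℝ, 0 < r ∧ r ^ 2 = -(x + s ^ 2 * x ^ 2 / 4 - s / 2) ∧
      r * u x ^ 2 ≤ 15 ∧ v x ^ 2 ≤ 15 * r := by
  set P : ℝ → ℝ := fun y => -(y + s ^ 2 * y ^ 2 / 4 - s / 2) with hP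
  set r : ℝ → ℝ := fun y => Real.sqrt (P y) with hr
  set D : ℝ → ℝ := fun y => -(1 + s ^ 2 * y / 2) with hD
  have hs2 : 0 < s ^ 2 := by positivity
  -- basic facts on the interval
  have hDl : ∀ y, x0 ≤ y → y ≤ -2 → D y ≤ 0 ∧ -1 ≤ D y := by
    intro y hy hy2
    have : x0 * s ^ 2 ≤ y * s ^ 2 := by gcongr
    have h3 : y * s ^ 2 ≤ 0 := by nlinarith
    simp only [hD]
    constructor <;> nlinarith
  have hPl : ∀ y, x0 ≤ y → y ≤ -2 → -y / 2 ≤ P y := by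
    intro y hy hy2
    have : x0 * s ^ 2 ≤ y * s ^ 2 := by gcongr
    simp only [hP]
    nlinarith
  have hP1 : ∀ y, x0 ≤ y → y ≤ -2 → 1 ≤ P y := by
    intro y hy hy2
    have := hPl y hy hy2
    linarith
  have hr1 : ∀ y, x0 ≤ y → y ≤ -2 → 1 ≤ r y := by
    intro y hy hy2
    exact Real.one_le_sqrt.mpr (hP1 y hy hy2)
  have hrsq : ∀ y, x0 ≤ y → y ≤ -2 → r y ^ 2 = P y := by
    intro y hy hy2
    exact Real.sq_sqrt (by linarith [hP1 y hy hy2])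
  have hPd : ∀ y, HasDerivAt P (D y) y := by
    intro y
    have := (((hasDerivAt_id' y).add (((hasDerivAt_pow 2 y).const_mul (s ^ 2)).div_const 4)).sub_const
      (s / 2)).neg
    refine HasDerivAt.congr_deriv this ?_
    simp [hD]; ring
  have hDd : ∀ y, HasDerivAt D (-(s ^ 2 / 2)) y := by
    intro y
    have := ((((hasDerivAt_id' y).const_mul (s ^ 2)).div_const 2).const_add 1).neg
    refine HasDerivAt.congr_deriv this ?_
    simp
  have hrd : ∀ y, x0 ≤ y → y ≤ -2 → HasDerivAt r (D y / (2 * r y)) y := by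
    intro y hy hy2
    exact (hPd y).sqrt (by linarith [hP1 y hy hy2])
  set g : ℝ → ℝ := fun y => D y / (2 * r y ^ 3) with hg
  set g' : ℝ → ℝ := fun y => -(s ^ 2 / (4 * r y ^ 3)) - 3 * D y ^ 2 / (4 * r y ^ 5) with hg'
  have hgd : ∀ y, x0 ≤ y → y ≤ -2 → HasDerivAt g (g' y) y := by
    intro y hy hy2
    have hry : 0 < r y := by linarith [hr1 y hy hy2]
    have := (hDd y).div (((hrd y hy hy2).pow 3).const_mul 2) (by simp; exact hry.ne')
    refine HasDerivAt.congr_deriv this ?_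
    simp only [hg', Pi.pow_apply]
    field_simp
    ring
  have hgl : ∀ y, x0 ≤ y → y ≤ -2 → -(1 / 2) ≤ g y ∧ g y ≤ 0 := by
    intro y hy hy2
    have hry := hr1 y hy hy2
    have h3 : 1 ≤ r y ^ 3 := one_le_pow₀ hry
    obtain ⟨a, b⟩ := hDl y hy hy2
    simp only [hg]
    constructor
    · rw [le_div_iff₀ (by positivity)]; nlinarith
    · exact div_nonpos_of_nonpos_of_nonneg a (by positivity)
  have hg'l : ∀ y, x0 ≤ y → y ≤ -2 → g' y ≤ 0 := by
    intro y hy hy2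
    have hry : 0 < r y := by linarith [hr1 y hy hy2]
    have a1 : 0 ≤ s ^ 2 / (4 * r y ^ 3) := by positivity
    have a2 : 0 ≤ 3 * D y ^ 2 / (4 * r y ^ 5) := by positivity
    simp only [hg']; linarith
  set W : ℝ → ℝ := fun y => r y * u y ^ 2 + v y ^ 2 / r y with hW
  set V : ℝ → ℝ := fun y => r y * u y ^ 2 + v y ^ 2 / r y + g y * (u y * v y) with hV
  have hVd : ∀ y, x0 ≤ y → y ≤ -2 → HasDerivAt V (g' y * (u y * v y)) y := by
    intro y hy hy2
    have hry : 0 < r y := by linarith [hr1 y hy hy2]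
    have hvy : HasDerivAt v (-(r y ^ 2) * u y) y := by
      convert hv y using 2
      rw [hrsq y hy hy2]; simp [hP]
    have := (((hrd y hy hy2).mul ((hu y).pow 2)).add ((hvy.pow 2).div (hrd y hy hy2) hry.ne')).add
      ((hgd y hy hy2).mul ((hu y).mul hvy))
    refine HasDerivAt.congr_deriv this ?_
    simp only [hg, Pi.pow_apply, Pi.mul_apply]
    field_simp
    ring
  have huv : ∀ y, x0 ≤ y → y ≤ -2 → |u y * v y| ≤ W y / 2 := by
    intro y hy hy2
    have hry : 0 < r y := by linarith [hr1 y hy hy2]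
    have e1 : W y - 2 * (u y * v y) = (r y * u y - v y) ^ 2 / r y := by
      simp only [hW]; field_simp; ring
    have e2 : W y + 2 * (u y * v y) = (r y * u y + v y) ^ 2 / r y := by
      simp only [hW]; field_simp; ring
    have p1 : 0 ≤ (r y * u y - v y) ^ 2 / r y := by positivity
    have p2 : 0 ≤ (r y * u y + v y) ^ 2 / r y := by positivity
    rw [abs_le]; constructor <;> linarith
  have hVW : ∀ y, x0 ≤ y → y ≤ -2 → W y * (3 / 4) ≤ V y ∧ V y ≤ W y * (5 / 4) := by
    intro y hy hy2
    have a := huv y hy hy2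
    obtain ⟨b1, b2⟩ := hgl y hy hy2
    have c : |g y * (u y * v y)| ≤ 1 / 2 * (W y / 2) := by
      rw [abs_mul]
      have : |g y| ≤ 1 / 2 := by rw [abs_le]; constructor <;> linarith
      gcongr
    rw [abs_le] at c
    have : V y = W y + g y * (u y * v y) := rfl
    constructor <;> linarith [c.1, c.2]
  have hanti : AntitoneOn (fun y => Real.exp (g y) * V y) (Icc x0 (-2)) := by
    have hd : ∀ y ∈ Icc x0 (-2), HasDerivAt (fun y => Real.exp (g y) * V y)
        (Real.exp (g y) * g' y * V y + Real.exp (g y) * (g' y * (u y * v y))) y := by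
      intro y hy
      exact ((hgd y hy.1 hy.2).exp).mul (hVd y hy.1 hy.2)
    apply antitoneOn_of_deriv_nonpos (convex_Icc _ _)
    · intro y hy; exact (hd y hy).continuousAt.continuousWithinAt
    · intro y hy; exact (hd y (interior_subset hy)).differentiableAt.differentiableWithinAt
    · intro y hy
      have hy' := interior_subset hy
      rw [(hd y hy').deriv]
      have a := huv y hy'.1 hy'.2
      have b := (hVW y hy'.1 hy'.2).1
      have c := hg'l y hy'.1 hy'.2
      have W0 : 0 ≤ W y := by linarith [abs_nonneg (u y * v y)]
      have d : 0 ≤ V y + u y * v y := by linarith [(abs_le.mp a).1]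
      have e := mul_nonpos_of_nonpos_of_nonneg c d
      have f := mul_nonpos_of_nonneg_of_nonpos (Real.exp_pos (g y)).le e
      linarith
  have hx02 : x0 ≤ -2 := le_trans hx hx2
  have hc := hanti ⟨le_refl _, hx02⟩ ⟨hx, hx2⟩ hx
  simp only at hc
  -- initial energy
  have hW0 : W x0 ≤ 3 := by
    have hry := hr1 x0 le_rfl hx02
    have hsq : (s * r x0) ^ 2 = 1 + s ^ 3 / 2 := by
      rw [mul_pow, hrsq x0 le_rfl hx02]
      simp only [hP]
      have : s ^ 2 * x0 ^ 2 * s ^ 2 = 4 := by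
        have : s ^ 2 * x0 ^ 2 * s ^ 2 = (x0 * s ^ 2) ^ 2 := by ring
        rw [this, hx0]; norm_num
      nlinarith
    have hs3 : s ^ 3 ≤ 1 := pow_le_one₀ hs.le hs1
    have hs30 : 0 < s ^ 3 := by positivity
    have a1 : 1 ≤ s * r x0 := by nlinarith [mul_pos hs (by linarith : 0 < r x0)]
    have a2 : s * r x0 ≤ 2 := by nlinarith [mul_pos hs (by linarith : 0 < r x0)]
    have b1 : r x0 * u x0 ^ 2 ≤ 2 := by
      calc r x0 * u x0 ^ 2 ≤ r x0 * s := by gcongr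
        _ ≤ 2 := by linarith
    have b2 : v x0 ^ 2 / r x0 ≤ 1 := by
      rw [div_le_one (by linarith)]
      refine h1.trans ?_
      rw [div_le_iff₀ hs]; linarith
    simp only [hW]; linarith
  have hWx : W x ≤ 15 := by
    have b := (hVW x hx hx2).1
    have b0 := (hVW x0 le_rfl hx02).2
    have W0 : 0 ≤ W x := by linarith [abs_nonneg (u x * v x), huv x hx hx2]
    have e1 : Real.exp (g x0) ≤ 1 := Real.exp_le_one_iff.mpr (hgl x0 le_rfl hx02).2
    have e2 : 1 / 2 ≤ Real.exp (g x) := by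
      linarith [Real.add_one_le_exp (g x), (hgl x hx hx2).1]
    have W00 : 0 ≤ W x0 := by linarith [abs_nonneg (u x0 * v x0), huv x0 le_rfl hx02]
    have V00 : 0 ≤ V x0 := by linarith [(hVW x0 le_rfl hx02).1]
    have V0 : 0 ≤ V x := by linarith
    have f1 : Real.exp (g x0) * V x0 ≤ V x0 := mul_le_of_le_one_left V00 e1
    have f2 : 1 / 2 * V x ≤ Real.exp (g x) * V x := by gcongr
    linarith
  have hrx : 0 < r x := by linarith [hr1 x hx hx2]
  refine ⟨r x, hrx, hrsq x hx hx2, ?_, ?_⟩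
  · have : 0 ≤ v x ^ 2 / r x := by positivity
    simp only [hW] at hWx; linarith
  · have h3 : 0 ≤ r x * u x ^ 2 := by positivity
    have : v x ^ 2 / r x ≤ 15 := by simp only [hW] at hWx; linarith
    rwa [div_le_iff₀ hrx] at this

/-- Phase 2: Gronwall on `[-2, 2]`. -/
lemma psiAux_phase2 (s : ℝ) (hs : 0 < s) (hs1 : s ≤ 1)
    (u v : ℝ → ℝ) (hu : ∀ x, HasDerivAt u (v x) x)
    (hv : ∀ x, HasDerivAt v ((x + s ^ 2 * x ^ 2 / 4 - s / 2) * u x) x)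
    (h0 : u (-2) ^ 2 + v (-2) ^ 2 ≤ 45) (x : ℝ) (hx : -2 ≤ x) (hx2 : x ≤ 2) :
    u x ^ 2 + v x ^ 2 ≤ 45 * Real.exp 20 := by
  have hanti : AntitoneOn (fun y => Real.exp (-5 * y) * (u y ^ 2 + v y ^ 2)) (Icc (-2) 2) := by
    have hd : ∀ y, HasDerivAt (fun y => Real.exp (-5 * y) * (u y ^ 2 + v y ^ 2))
        (Real.exp (-5 * y) * (2 * (u y * v y) * (1 + (y + s ^ 2 * y ^ 2 / 4 - s / 2))
          - 5 * (u y ^ 2 + v y ^ 2))) y := by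
      intro y
      have := (((hasDerivAt_id' y).const_mul (-5)).exp).mul (((hu y).pow 2).add ((hv y).pow 2))
      refine HasDerivAt.congr_deriv this ?_
      simp
      ring
    apply antitoneOn_of_deriv_nonpos (convex_Icc _ _)
    · intro y hy; exact (hd y).continuousAt.continuousWithinAt
    · intro y hy; exact (hd y).differentiableAt.differentiableWithinAt
    · intro y hy
      obtain ⟨ha, hb⟩ := interior_subset hy
      rw [(hd y).deriv]
      apply mul_nonpos_of_nonneg_of_nonpos (Real.exp_pos _).le
      set k := 1 + (y + s ^ 2 * y ^ 2 / 4 - s / 2) with hk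
      have hs2 : s ^ 2 ≤ 1 := pow_le_one₀ hs.le hs1
      have hy2 : y ^ 2 ≤ 4 := by nlinarith
      have hsy : s ^ 2 * y ^ 2 ≤ 1 * 4 := by gcongr
      have hsy0 : 0 ≤ s ^ 2 * y ^ 2 := by positivity
      have k1 : -5 ≤ k := by linarith
      have k2 : k ≤ 5 := by linarith
      nlinarith [mul_nonneg (by linarith : 0 ≤ 5 - k) (sq_nonneg (u y + v y)),
        mul_nonneg (by linarith : 0 ≤ 5 + k) (sq_nonneg (u y - v y))]
  have hc := hanti ⟨le_refl _, by norm_num⟩ ⟨hx, hx2⟩ hx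
  simp only at hc
  have e : Real.exp (-5 * -2) = Real.exp (-5 * x) * Real.exp (10 + 5 * x) := by
    rw [← Real.exp_add]; ring_nf
  rw [e, mul_assoc] at hc
  have hc' := le_of_mul_le_mul_left hc (Real.exp_pos _)
  have : Real.exp (10 + 5 * x) ≤ Real.exp 20 := Real.exp_le_exp.mpr (by linarith)
  calc _ ≤ _ := hc'
    _ ≤ Real.exp 20 * 45 := by gcongr
    _ = _ := by ring

/-- Phase 3: decay on `[2, ∞)`. -/
lemma psiAux_phase3 (s L : ℝ) (hs : 0 < s) (hs1 : s ≤ 1)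
    (u v : ℝ → ℝ) (hu : ∀ x, HasDerivAt u (v x) x)
    (hv : ∀ x, HasDerivAt v ((x + s ^ 2 * x ^ 2 / 4 - s / 2) * u x) x)
    (hul : Tendsto u atTop (nhds 0)) (hvl : Tendsto v atTop (nhds 0))
    (h0 : u 2 ^ 2 + v 2 ^ 2 ≤ L) (x : ℝ) (hx : 2 ≤ x) :
    v x ^ 2 ≤ L ∧ u x ^ 2 * x ^ 4 ≤ 16 * L := by
  set q : ℝ → ℝ := fun y => y + s ^ 2 * y ^ 2 / 4 - s / 2 with hq
  have hq1 : ∀ y, 2 ≤ y → 1 ≤ q y := by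
    intro y hy
    have : 0 ≤ s ^ 2 * y ^ 2 / 4 := by positivity
    simp only [hq]; linarith
  have huvd : ∀ y, HasDerivAt (fun y => u y * v y) (v y ^ 2 + q y * u y ^ 2) y := by
    intro y
    refine HasDerivAt.congr_deriv ((hu y).mul (hv y)) ?_
    simp only [hq]; ring
  have huv : ∀ y, 2 ≤ y → u y * v y ≤ 0 := by
    intro y hy
    have hm : MonotoneOn (fun y => u y * v y) (Ici 2) := by
      apply monotoneOn_of_deriv_nonneg (convex_Ici _)
      · intro y hy; exact (huvd y).continuousAt.continuousWithinAt
      · intro y hy; exact (huvd y).differentiableAt.differentiableWithinAt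
      · intro y hy
        rw [(huvd y).deriv]
        have : 0 ≤ q y := by linarith [hq1 y (interior_subset hy)]
        positivity
    have hl : Tendsto (fun y => u y * v y) atTop (nhds 0) := by simpa using hul.mul hvl
    apply ge_of_tendsto hl
    filter_upwards [eventually_ge_atTop y] with z hz
    exact hm hy (le_trans hy hz : (2:ℝ) ≤ z) hz
  have hvv : AntitoneOn (fun y => v y ^ 2) (Ici 2) := by
    have hd : ∀ y, HasDerivAt (fun y => v y ^ 2) (2 * q y * (u y * v y)) y := by
      intro y
      refine HasDerivAt.congr_deriv ((hv y).pow 2) ?_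
      simp only [hq]; ring
    apply antitoneOn_of_deriv_nonpos (convex_Ici _)
    · intro y hy; exact (hd y).continuousAt.continuousWithinAt
    · intro y hy; exact (hd y).differentiableAt.differentiableWithinAt
    · intro y hy
      rw [(hd y).deriv]
      have h2 := interior_subset hy
      exact mul_nonpos_of_nonneg_of_nonpos (by linarith [hq1 y h2]) (huv y h2)
  have hvu : ∀ y, 2 ≤ y → u y ^ 2 ≤ v y ^ 2 := by
    intro y hy
    have hd : ∀ y, HasDerivAt (fun y => v y ^ 2 - u y ^ 2) (2 * (q y - 1) * (u y * v y)) y := by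
      intro y
      refine HasDerivAt.congr_deriv (((hv y).pow 2).sub ((hu y).pow 2)) ?_
      simp only [hq]; ring
    have hm : AntitoneOn (fun y => v y ^ 2 - u y ^ 2) (Ici 2) := by
      apply antitoneOn_of_deriv_nonpos (convex_Ici _)
      · intro y hy; exact (hd y).continuousAt.continuousWithinAt
      · intro y hy; exact (hd y).differentiableAt.differentiableWithinAt
      · intro y hy
        rw [(hd y).deriv]
        have h2 := interior_subset hy
        exact mul_nonpos_of_nonneg_of_nonpos (by linarith [hq1 y h2]) (huv y h2)
    have hl : Tendsto (fun y => v y ^ 2 - u y ^ 2) atTop (nhds 0) := by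
      simpa using (hvl.pow 2).sub (hul.pow 2)
    have : 0 ≤ v y ^ 2 - u y ^ 2 := by
      apply le_of_tendsto hl
      filter_upwards [eventually_ge_atTop y] with z hz
      exact hm hy (le_trans hy hz : (2:ℝ) ≤ z) hz
    linarith
  have hexp : AntitoneOn (fun y => Real.exp (2 * y) * u y ^ 2) (Ici 2) := by
    have hd : ∀ y, HasDerivAt (fun y => Real.exp (2 * y) * u y ^ 2)
        (Real.exp (2 * y) * (2 * (u y ^ 2 + u y * v y))) y := by
      intro y
      have := (((hasDerivAt_id' y).const_mul 2).exp).mul ((hu y).pow 2)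
      refine HasDerivAt.congr_deriv this ?_
      simp
      ring
    apply antitoneOn_of_deriv_nonpos (convex_Ici _)
    · intro y hy; exact (hd y).continuousAt.continuousWithinAt
    · intro y hy; exact (hd y).differentiableAt.differentiableWithinAt
    · intro y hy
      rw [(hd y).deriv]
      have h2 := interior_subset hy
      apply mul_nonpos_of_nonneg_of_nonpos (Real.exp_pos _).le
      have a := huv y h2
      have b : |u y| ≤ |v y| := sq_le_sq.mp (hvu y h2)
      have c : u y * v y = -(|u y| * |v y|) := by
        rw [← abs_mul, abs_of_nonpos a]; ring
      have d : u y ^ 2 = |u y| * |u y| := by rw [abs_mul_abs_self]; ring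
      have e : |u y| * |u y| ≤ |u y| * |v y| := by gcongr
      linarith
  have h2 : (2:ℝ) ∈ Ici (2:ℝ) := mem_Ici.mpr le_rfl
  constructor
  · have := hvv h2 hx hx
    simp only at this
    linarith [sq_nonneg (u 2)]
  · have hc := hexp h2 hx hx
    simp only at hc
    have e : Real.exp (2 * x) = Real.exp (2 * 2) * Real.exp ((x - 2) / 2) ^ 4 := by
      rw [← Real.exp_nat_mul, ← Real.exp_add]; congr 1; push_cast; ring
    rw [e, mul_assoc] at hc
    have hc' := le_of_mul_le_mul_left hc (Real.exp_pos _)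
    have f : x / 2 ≤ Real.exp ((x - 2) / 2) := by linarith [Real.add_one_le_exp ((x - 2) / 2)]
    have f4 : (x / 2) ^ 4 ≤ Real.exp ((x - 2) / 2) ^ 4 := by gcongr
    have : (x / 2) ^ 4 * u x ^ 2 ≤ u 2 ^ 2 := le_trans (by gcongr) hc'
    nlinarith [sq_nonneg (v 2)]

set_option maxHeartbeats 800000 in
lemma psiAux_ode (s x0 : ℝ) (hs : 0 < s) (hs1 : s ≤ 1) (hx0 : x0 * s ^ 2 = -2)
    (u v : ℝ → ℝ) (hu : ∀ x, HasDerivAt u (v x) x)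
    (hv : ∀ x, HasDerivAt v ((x + s ^ 2 * x ^ 2 / 4 - s / 2) * u x) x)
    (hul : Tendsto u atTop (nhds 0)) (hvl : Tendsto v atTop (nhds 0))
    (h0 : u x0 ^ 2 ≤ s) (h1 : v x0 ^ 2 ≤ 1 / s) (x : ℝ) (hx : x0 ≤ x) :
    u x ^ 4 * max |x| 1 ≤ 256 * (45 * Real.exp 20) ^ 2 ∧
    v x ^ 4 ≤ 256 * (45 * Real.exp 20) ^ 2 * max |x| 1 ∧
    ((x + s ^ 2 * x ^ 2 / 4 - s / 2) * u x) ^ 4 ≤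
      256 * (45 * Real.exp 20) ^ 2 * (max |x| 1) ^ 3 := by
  have hx02 : x0 ≤ -2 := by
    have : s ^ 2 ≤ 1 := pow_le_one₀ hs.le hs1
    have : 0 < s ^ 2 := by positivity
    nlinarith
  set L := 45 * Real.exp 20 with hL
  have hL1 : 45 ≤ L := by
    have : 1 ≤ Real.exp 20 := Real.one_le_exp (by norm_num)
    linarith
  have hLL : 2025 ≤ L ^ 2 := by nlinarith
  set q := x + s ^ 2 * x ^ 2 / 4 - s / 2 with hq
  have hs2 : s ^ 2 ≤ 1 := pow_le_one₀ hs.le hs1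
  have hs20 : 0 < s ^ 2 := by positivity
  have hsx0 : 0 ≤ s ^ 2 * x ^ 2 := by positivity
  clear_value L q
  rcases le_total x (-2) with h | h
  · obtain ⟨r, hr, hr2, ha, hb⟩ := psiAux_phase1 s x0 hs hs1 hx0 u v hu hv h0 h1 x hx h
    have hm : max |x| 1 = -x := by
      rw [abs_of_nonpos (by linarith)]; exact max_eq_left (by linarith)
    rw [hm]
    have h3 : x0 * s ^ 2 ≤ x * s ^ 2 := by gcongr
    have p1 : -x / 2 ≤ r ^ 2 := by rw [hr2]; nlinarith
    have p2 : r ^ 2 ≤ 2 * (-x) := by rw [hr2]; linarith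
    have hq' : q = -r ^ 2 := by rw [hr2]; simp only [hq]; ring
    have hxp : 0 < -x := by linarith
    have a4 : r ^ 2 * u x ^ 4 ≤ 225 := by
      have : (r * u x ^ 2) ^ 2 ≤ 15 ^ 2 := by gcongr
      linarith
    have b4 : v x ^ 4 ≤ 225 * r ^ 2 := by
      have : (v x ^ 2) ^ 2 ≤ (15 * r) ^ 2 := by gcongr
      linarith
    have u4 : 0 ≤ u x ^ 4 := by positivity
    refine ⟨?_, ?_, ?_⟩
    · have : (-x / 2) * u x ^ 4 ≤ r ^ 2 * u x ^ 4 := by gcongr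
      linarith
    · have : 2025 * (-x) ≤ L ^ 2 * (-x) := by gcongr
      linarith
    · rw [hq']
      have e : (-r ^ 2 * u x) ^ 4 = (r ^ 2) ^ 3 * (r ^ 2 * u x ^ 4) := by ring
      rw [e]
      have : (r ^ 2) ^ 3 * (r ^ 2 * u x ^ 4) ≤ (2 * (-x)) ^ 3 * 225 := by gcongr
      have : 2025 * (-x) ^ 3 ≤ L ^ 2 * (-x) ^ 3 := by gcongr
      have : 0 ≤ (-x) ^ 3 := by positivity
      linarith
  have hm2 : u (-2) ^ 2 + v (-2) ^ 2 ≤ 45 := by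
    obtain ⟨r, hr, hr2, ha, hb⟩ := psiAux_phase1 s x0 hs hs1 hx0 u v hu hv h0 h1 (-2) hx02 le_rfl
    have p1 : 1 ≤ r := by nlinarith
    have p2 : r ≤ 2 := by nlinarith
    nlinarith [sq_nonneg (u (-2))]
  have hphase2 := psiAux_phase2 s hs hs1 u v hu hv hm2
  rcases le_total x 2 with h' | h'
  · have hE := hphase2 x h h'
    rw [← hL] at hE
    have hu2 : u x ^ 2 ≤ L := by linarith [sq_nonneg (v x)]
    have hv2 : v x ^ 2 ≤ L := by linarith [sq_nonneg (u x)]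
    have hu4 : u x ^ 4 ≤ L ^ 2 := by
      have : (u x ^ 2) ^ 2 ≤ L ^ 2 := by gcongr
      linarith
    have hv4 : v x ^ 4 ≤ L ^ 2 := by
      have : (v x ^ 2) ^ 2 ≤ L ^ 2 := by gcongr
      linarith
    have m1 : 1 ≤ max |x| 1 := le_max_right _ _
    have m2 : max |x| 1 ≤ 2 := max_le (abs_le.mpr ⟨h, h'⟩) (by norm_num)
    have hx2 : x ^ 2 ≤ 4 := by nlinarith
    have hsy : s ^ 2 * x ^ 2 ≤ 1 * 4 := by gcongr
    have q1 : |q| ≤ 4 := by rw [abs_le]; constructor <;> linarith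
    have q4 : q ^ 4 ≤ 256 := by
      have : |q| ^ 4 ≤ 4 ^ 4 := by gcongr
      rw [Even.pow_abs (by decide)] at this; linarith
    have m3 : 1 ≤ (max |x| 1) ^ 3 := one_le_pow₀ m1
    refine ⟨?_, ?_, ?_⟩
    · calc u x ^ 4 * max |x| 1 ≤ L ^ 2 * 2 := by gcongr
        _ ≤ _ := by linarith
    · have h5 : 256 * L ^ 2 ≤ 256 * L ^ 2 * max |x| 1 := le_mul_of_one_le_right (by positivity) m1
      have h6 : 0 ≤ L ^ 2 := by positivity
      linarith
    · rw [mul_pow]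
      calc q ^ 4 * u x ^ 4 ≤ 256 * L ^ 2 := by gcongr
        _ ≤ _ := le_mul_of_one_le_right (by positivity) m3
  · have hE := hphase2 2 (by norm_num) le_rfl
    rw [← hL] at hE
    obtain ⟨hv2, hu2⟩ := psiAux_phase3 s L hs hs1 u v hu hv hul hvl hE x h'
    have hm : max |x| 1 = x := by
      rw [abs_of_nonneg (by linarith)]; exact max_eq_left (by linarith)
    rw [hm]
    have hxp : 0 < x := by linarith
    have hv4 : v x ^ 4 ≤ L ^ 2 := by
      have : (v x ^ 2) ^ 2 ≤ L ^ 2 := by gcongr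
      linarith
    have hu4 : u x ^ 4 * x ^ 8 ≤ 256 * L ^ 2 := by
      have : (u x ^ 2 * x ^ 4) ^ 2 ≤ (16 * L) ^ 2 := by gcongr
      linarith
    have q0 : 0 ≤ q := by linarith
    have q1 : q ≤ x ^ 2 := by nlinarith
    have x1 : 1 ≤ x := by linarith
    refine ⟨?_, ?_, ?_⟩
    · refine le_trans ?_ hu4
      gcongr
      calc x = x ^ 1 := by ring
        _ ≤ x ^ 8 := pow_le_pow_right₀ x1 (by norm_num)
    · have h5 : 256 * L ^ 2 ≤ 256 * L ^ 2 * x := le_mul_of_one_le_right (by positivity) x1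
      have h6 : 0 ≤ L ^ 2 := by positivity
      linarith
    · rw [mul_pow]
      calc q ^ 4 * u x ^ 4 ≤ (x ^ 2) ^ 4 * u x ^ 4 := by gcongr
        _ = u x ^ 4 * x ^ 8 := by ring
        _ ≤ 256 * L ^ 2 := hu4
        _ ≤ _ := le_mul_of_one_le_right (by positivity) (one_le_pow₀ x1)

open Polynomial in
lemma psiAux_hermite_deriv (n : ℕ) :
    derivative (hermite (n + 1)) = ((n : ℤ[X]) + 1) * hermite n := by
  induction n with
  | zero => simp
  | succ n ih =>
    rw [hermite_succ (n + 1), derivative_sub, derivative_mul, ih, hermite_succ n]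
    simp only [derivative_X, derivative_mul, derivative_add, derivative_natCast, derivative_one]
    push_cast
    ring

/-- The Hermite polynomial as a real function. -/
noncomputable def psiAuxH (n : ℕ) : Polynomial ℝ := (Polynomial.hermite n).map (Int.castRingHom ℝ)

open Polynomial in
lemma psiAuxH_succ (n : ℕ) : psiAuxH (n + 1) = X * psiAuxH n - derivative (psiAuxH n) := by
  simp [psiAuxH, hermite_succ, derivative_map]

open Polynomial in
lemma psiAuxH_deriv (n : ℕ) : derivative (psiAuxH (n + 1)) = ((n : ℝ[X]) + 1) * psiAuxH n := by
  rw [psiAuxH, derivative_map, psiAux_hermite_deriv]; simp [psiAuxH]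

open Polynomial in
lemma psiAuxH_ode (n : ℕ) : derivative (derivative (psiAuxH n)) =
    X * derivative (psiAuxH n) - (n : ℝ[X]) * psiAuxH n := by
  have h1 := psiAuxH_deriv n
  rw [psiAuxH_succ] at h1
  simp only [derivative_sub, derivative_mul, derivative_X] at h1
  linear_combination -h1

lemma psiAuxH_eq (n : ℕ) (x : ℝ) : hermiteP n x = (psiAuxH n).eval x := by
  have := Polynomial.hermite_eq_deriv_gaussian' n x
  rw [hermiteP, iteratedDeriv_eq_iterate, psiAuxH, Polynomial.eval_map]
  rw [Polynomial.aeval_def] at this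
  have e : (fun t : ℝ => Real.exp (-t ^ 2 / 2)) = fun y => Real.exp (-(y ^ 2 / 2)) := by
    ext t; congr 1; ring
  rw [e]
  have h2 : Polynomial.eval₂ (Int.castRingHom ℝ) x (Polynomial.hermite n) =
    Polynomial.eval₂ (algebraMap ℤ ℝ) x (Polynomial.hermite n) := rfl
  rw [h2, this]; ring

lemma psiAuxH_zero_rec (n : ℕ) :
    (psiAuxH (n + 2)).eval 0 = -((n : ℝ) + 1) * (psiAuxH n).eval 0 := by
  rw [psiAuxH_succ, psiAuxH_deriv]; simp; ring

lemma psiAuxH_zero_bound (n : ℕ) :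
    ((psiAuxH n).eval 0) ^ 4 * ((n : ℝ) + 1) ≤ ((n.factorial : ℝ)) ^ 2 := by
  induction n using Nat.twoStepInduction with
  | zero => simp [psiAuxH]
  | one => simp [psiAuxH]
  | more n ih _ =>
    rw [psiAuxH_zero_rec, Nat.factorial_succ, Nat.factorial_succ]
    push_cast
    have h0 : (0:ℝ) ≤ n := Nat.cast_nonneg n
    set h := (psiAuxH n).eval 0
    set f := (n.factorial : ℝ)
    have e1 : (-((n : ℝ) + 1) * h) ^ 4 * ((n : ℝ) + 2 + 1)
        = (h ^ 4 * (n + 1)) * ((n + 1) ^ 2 * ((n + 1) * (n + 3))) := by ring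
    have e2 : (((n : ℝ) + 1 + 1) * ((n + 1) * f)) ^ 2 = f ^ 2 * ((n + 1) ^ 2 * (n + 2) ^ 2) := by
      ring
    rw [e1, e2]
    gcongr
    nlinarith

/-- The derivative of `osc`. -/
noncomputable def psiAuxD (m : ℕ) (x : ℝ) : ℝ :=
  (2 * Real.pi) ^ (-(1:ℝ)/4) * ((m.factorial : ℝ)) ^ (-(1:ℝ)/2) *
    Real.exp (-x ^ 2 / 4) *
      ((Polynomial.derivative (psiAuxH m)).eval x - x / 2 * (psiAuxH m).eval x)

lemma psiAux_exp_deriv (x : ℝ) : HasDerivAt (fun x : ℝ => Real.exp (-x ^ 2 / 4))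
    (Real.exp (-x ^ 2 / 4) * (-x / 2)) x := by
  have := (((hasDerivAt_pow 2 x).neg).div_const 4).exp
  refine HasDerivAt.congr_deriv this ?_
  simp; ring

lemma psiAux_osc_deriv (m : ℕ) (x : ℝ) : HasDerivAt (osc m) (psiAuxD m x) x := by
  have e : osc m = fun x => (2 * Real.pi) ^ (-(1:ℝ)/4) * ((m.factorial : ℝ)) ^ (-(1:ℝ)/2) *
    Real.exp (-x ^ 2 / 4) * (psiAuxH m).eval x := by
    ext x; rw [osc, psiAuxH_eq]
  rw [e]
  have := ((psiAux_exp_deriv x).const_mul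
    ((2 * Real.pi) ^ (-(1:ℝ)/4) * ((m.factorial : ℝ)) ^ (-(1:ℝ)/2))).mul ((psiAuxH m).hasDerivAt x)
  refine HasDerivAt.congr_deriv this ?_
  rw [psiAuxD]; ring

lemma psiAux_oscD_deriv (m : ℕ) (x : ℝ) :
    HasDerivAt (psiAuxD m) ((x ^ 2 / 4 - m - 1 / 2) * osc m x) x := by
  have := ((psiAux_exp_deriv x).const_mul
    ((2 * Real.pi) ^ (-(1:ℝ)/4) * ((m.factorial : ℝ)) ^ (-(1:ℝ)/2))).mul
    (((Polynomial.derivative (psiAuxH m)).hasDerivAt x).sub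
      (((hasDerivAt_id' x).div_const 2).mul ((psiAuxH m).hasDerivAt x)))
  refine HasDerivAt.congr_deriv this ?_
  rw [osc, psiAuxH_eq, psiAuxH_ode]
  simp
  ring

lemma psiAux_tendsto (c : ℝ) (p : Polynomial ℝ) :
    Tendsto (fun x : ℝ => c * Real.exp (-x ^ 2 / 4) * p.eval x) atTop (nhds 0) := by
  have h := ((p.tendsto_div_exp_atTop).abs).const_mul (|c| * Real.exp 1)
  simp only [abs_zero, mul_zero] at h
  apply squeeze_zero_norm _ h
  intro x
  rw [Real.norm_eq_abs, abs_mul, abs_mul, abs_div, Real.abs_exp, Real.abs_exp]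
  have : Real.exp (-x ^ 2 / 4) ≤ Real.exp 1 / Real.exp x := by
    rw [← Real.exp_sub]
    exact Real.exp_le_exp.mpr (by nlinarith [sq_nonneg (x / 2 - 1)])
  calc |c| * Real.exp (-x ^ 2 / 4) * |p.eval x| ≤ |c| * (Real.exp 1 / Real.exp x) * |p.eval x| := by
        gcongr
    _ = _ := by ring

lemma psiAux_osc_tendsto (m : ℕ) : Tendsto (osc m) atTop (nhds 0) := by
  have := psiAux_tendsto ((2 * Real.pi) ^ (-(1:ℝ)/4) * ((m.factorial : ℝ)) ^ (-(1:ℝ)/2)) (psiAuxH m)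
  refine this.congr fun x => ?_
  rw [osc, psiAuxH_eq]

lemma psiAux_oscD_tendsto (m : ℕ) : Tendsto (psiAuxD m) atTop (nhds 0) := by
  have := psiAux_tendsto ((2 * Real.pi) ^ (-(1:ℝ)/4) * ((m.factorial : ℝ)) ^ (-(1:ℝ)/2))
    (Polynomial.derivative (psiAuxH m) - Polynomial.C (1 / 2) * Polynomial.X * psiAuxH m)
  refine this.congr fun x => ?_
  rw [psiAuxD]
  simp only [Polynomial.eval_sub, Polynomial.eval_mul, Polynomial.eval_C, Polynomial.eval_X]
  ring

/-- Bounds at zero (squared prefactor is at most `1 / m!`). -/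
lemma psiAux_prefactor (m : ℕ) :
    ((2 * Real.pi) ^ (-(1:ℝ)/4) * ((m.factorial : ℝ)) ^ (-(1:ℝ)/2)) ^ 4 ≤
      1 / (m.factorial : ℝ) ^ 2 := by
  have hf : (0:ℝ) < m.factorial := by positivity
  have hpi : 1 ≤ 2 * Real.pi := by linarith [Real.pi_gt_three]
  rw [mul_pow, ← Real.rpow_natCast, ← Real.rpow_natCast, ← Real.rpow_mul (by positivity),
    ← Real.rpow_mul (by positivity)]
  norm_num
  rw [Real.rpow_neg_one]
  exact mul_le_of_le_one_left (by positivity) (inv_le_one_of_one_le₀ hpi)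

lemma psiAux_osc_zero (n : ℕ) : (osc n 0) ^ 4 * n ≤ 1 := by
  have hf : (0:ℝ) < (n.factorial : ℝ) ^ 2 := by positivity
  have h := psiAuxH_zero_bound n
  have hp := psiAux_prefactor n
  have e : (osc n 0) ^ 4 * n = ((2 * Real.pi) ^ (-(1:ℝ)/4) * ((n.factorial : ℝ)) ^ (-(1:ℝ)/2)) ^ 4
      * ((psiAuxH n).eval 0 ^ 4 * n) := by
    rw [osc, psiAuxH_eq]; simp; ring
  rw [e]
  have h4 : 0 ≤ (psiAuxH n).eval 0 ^ 4 := by positivity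
  calc _ ≤ 1 / (n.factorial : ℝ) ^ 2 * (n.factorial : ℝ) ^ 2 := by
        gcongr; linarith
    _ = 1 := by field_simp

lemma psiAux_oscD_zero (n : ℕ) : (psiAuxD n 0) ^ 4 ≤ n := by
  have hp := psiAux_prefactor n
  have e : (psiAuxD n 0) ^ 4 = ((2 * Real.pi) ^ (-(1:ℝ)/4) * ((n.factorial : ℝ)) ^ (-(1:ℝ)/2)) ^ 4
      * ((Polynomial.derivative (psiAuxH n)).eval 0 ^ 4) := by
    rw [psiAuxD]; simp; ring
  rw [e]
  have key : (Polynomial.derivative (psiAuxH n)).eval 0 ^ 4 ≤ (n.factorial : ℝ) ^ 2 * n := by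
    rcases n with _ | n
    · simp [psiAuxH]
    · rw [psiAuxH_deriv, Nat.factorial_succ]
      have h := psiAuxH_zero_bound n
      have e1 : (((n : Polynomial ℝ) + 1) * psiAuxH n).eval 0 ^ 4 =
        ((psiAuxH n).eval 0 ^ 4 * ((n : ℝ) + 1)) * ((n : ℝ) + 1) ^ 3 := by simp; ring
      rw [e1]
      push_cast
      calc _ ≤ (n.factorial : ℝ) ^ 2 * ((n : ℝ) + 1) ^ 3 := by gcongr
        _ = _ := by ring
  have hf : (0:ℝ) < (n.factorial : ℝ) ^ 2 := by positivity
  calc _ ≤ 1 / (n.factorial : ℝ) ^ 2 * ((n.factorial : ℝ) ^ 2 * n) := by gcongr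
    _ = n := by field_simp

lemma psiAux_root {y B m k : ℝ} (hB : 0 ≤ B) (hm : 0 < m) (h : y ^ 4 ≤ B * m ^ k) :
    |y| ≤ (B ^ ((1:ℝ)/4)) * m ^ (k / 4) := by
  have h2 : (B ^ ((1:ℝ)/4) * m ^ (k / 4)) ^ 4 = B * m ^ k := by
    rw [mul_pow, ← Real.rpow_natCast, ← Real.rpow_natCast, ← Real.rpow_mul hB,
      ← Real.rpow_mul hm.le]
    norm_num
  rw [← h2, ← Even.pow_abs (by decide : Even 4) y] at h
  exact le_of_pow_le_pow_left₀ (by norm_num) (by positivity) h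

/-- uniform polynomial bounds on `ψ_n` and its first two derivatives on
`[−2n^{2/3}, ∞)`. -/
theorem psiN_bounds :
    ∃ C : ℝ, 0 < C ∧ ∀ n : ℕ, 1 ≤ n → ∀ x : ℝ, -(2 * (n : ℝ) ^ ((2:ℝ)/3)) ≤ x →
      |psiN n x| ≤ C * (max |x| 1) ^ (-(1:ℝ)/4) ∧
      |deriv (psiN n) x| ≤ C * (max |x| 1) ^ ((1:ℝ)/4) ∧
      |deriv (deriv (psiN n)) x| ≤ C * (max |x| 1) ^ ((3:ℝ)/4) := by
  refine ⟨(256 * (45 * Real.exp 20) ^ 2) ^ ((1:ℝ)/4), by positivity, ?_⟩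
  intro n hn x hx
  have hn1 : (1:ℝ) ≤ n := by exact_mod_cast hn
  have hn0 : (0:ℝ) ≤ n := by linarith
  obtain ⟨b, hb⟩ : ∃ b : ℝ, b = (n : ℝ) ^ ((1:ℝ)/12) := ⟨_, rfl⟩
  have hb1 : 1 ≤ b := by rw [hb]; exact Real.one_le_rpow hn1 (by norm_num)
  have hb0 : 0 < b := by linarith
  have hbn : (n : ℝ) = b ^ 12 := by
    rw [hb, ← Real.rpow_natCast, ← Real.rpow_mul hn0]; norm_num
  have hb6 : Real.sqrt n = b ^ 6 := by
    rw [hbn, show b ^ 12 = (b ^ 6) ^ 2 by ring]; exact Real.sqrt_sq (by positivity)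
  have hb2 : (n : ℝ) ^ (-(1:ℝ)/6) = (b ^ 2)⁻¹ := by
    rw [hb, ← Real.rpow_natCast, ← Real.rpow_mul hn0, ← Real.rpow_neg hn0]; norm_num
  have hb8 : (n : ℝ) ^ ((2:ℝ)/3) = b ^ 8 := by
    rw [hb, ← Real.rpow_natCast, ← Real.rpow_mul hn0]; norm_num
  have hpsi : psiN n = fun x => b * osc n (2 * b ^ 6 + (b ^ 2)⁻¹ * x) := by
    ext x; rw [psiN, psiUp, ← hb, hb6, hb2]
  set v : ℝ → ℝ := fun x => b * (psiAuxD n (2 * b ^ 6 + (b ^ 2)⁻¹ * x) * (b ^ 2)⁻¹) with hvdef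
  have hlin : ∀ x : ℝ, HasDerivAt (fun x => 2 * b ^ 6 + (b ^ 2)⁻¹ * x) ((b ^ 2)⁻¹) x := by
    intro x
    have := (((hasDerivAt_id' x).const_mul ((b ^ 2)⁻¹)).const_add (2 * b ^ 6))
    refine HasDerivAt.congr_deriv this ?_
    simp
  have hu : ∀ x, HasDerivAt (psiN n) (v x) x := by
    intro x
    rw [hpsi]
    exact ((psiAux_osc_deriv n _).comp x (hlin x)).const_mul b
  have hv : ∀ x, HasDerivAt v ((x + ((b ^ 4)⁻¹) ^ 2 * x ^ 2 / 4 - (b ^ 4)⁻¹ / 2) * psiN n x) x := by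
    intro x
    have := (((psiAux_oscD_deriv n _).comp x (hlin x)).mul_const ((b ^ 2)⁻¹)).const_mul b
    refine HasDerivAt.congr_deriv this ?_
    rw [hpsi, hbn]
    field_simp
    ring
  have htop : Tendsto (fun x : ℝ => 2 * b ^ 6 + (b ^ 2)⁻¹ * x) atTop atTop :=
    tendsto_atTop_add_const_left _ _ (tendsto_id.const_mul_atTop (by positivity))
  have hul : Tendsto (psiN n) atTop (nhds 0) := by
    rw [hpsi]
    simpa using ((psiAux_osc_tendsto n).comp htop).const_mul b
  have hvl : Tendsto v atTop (nhds 0) := by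
    simpa using (((psiAux_oscD_tendsto n).comp htop).mul_const ((b ^ 2)⁻¹)).const_mul b
  have hz : 2 * b ^ 6 + (b ^ 2)⁻¹ * (-(2 * b ^ 8)) = 0 := by field_simp; ring
  have h0 : psiN n (-(2 * b ^ 8)) ^ 2 ≤ (b ^ 4)⁻¹ := by
    rw [hpsi]; simp only [hz]
    have := psiAux_osc_zero n
    rw [hbn] at this
    have h2 : (osc n 0 ^ 2 * b ^ 6) ≤ 1 := by
      have e : (osc n 0 ^ 2 * b ^ 6) ^ 2 ≤ 1 := by
        calc _ = osc n 0 ^ 4 * b ^ 12 := by ring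
          _ ≤ 1 := this
      exact (sq_le_one_iff₀ (by positivity)).mp e
    rw [← one_div, le_div_iff₀ (by positivity)]
    calc _ = osc n 0 ^ 2 * b ^ 6 := by ring
      _ ≤ 1 := h2
  have h1 : v (-(2 * b ^ 8)) ^ 2 ≤ 1 / (b ^ 4)⁻¹ := by
    simp only [hvdef, hz]
    have := psiAux_oscD_zero n
    rw [hbn] at this
    have h2 : psiAuxD n 0 ^ 2 ≤ b ^ 6 := by
      have e : (psiAuxD n 0 ^ 2) ^ 2 ≤ (b ^ 6) ^ 2 := by
        calc _ = psiAuxD n 0 ^ 4 := by ring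
          _ ≤ b ^ 12 := this
          _ = _ := by ring
      exact le_of_pow_le_pow_left₀ (by norm_num) (by positivity) e
    calc _ = psiAuxD n 0 ^ 2 * (b ^ 2)⁻¹ := by field_simp
      _ ≤ b ^ 6 * (b ^ 2)⁻¹ := by gcongr
      _ = _ := by field_simp
  have hs0 : 0 < (b ^ 4)⁻¹ := by positivity
  have hs1 : (b ^ 4)⁻¹ ≤ 1 := inv_le_one_of_one_le₀ (one_le_pow₀ hb1)
  have hx0 : -(2 * b ^ 8) * ((b ^ 4)⁻¹) ^ 2 = -2 := by field_simp
  rw [hb8] at hx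
  obtain ⟨k1, k2, k3⟩ := psiAux_ode (b ^ 4)⁻¹ (-(2 * b ^ 8)) hs0 hs1 hx0 (psiN n) v hu hv hul hvl
    h0 h1 x hx
  have hd1 : deriv (psiN n) = v := funext fun y => (hu y).deriv
  rw [hd1, (hv x).deriv]
  have hm : 0 < max |x| 1 := lt_of_lt_of_le one_pos (le_max_right _ _)
  set B := 256 * (45 * Real.exp 20) ^ 2 with hBdef
  have hB : 0 ≤ B := by positivity
  refine ⟨psiAux_root hB hm ?_, psiAux_root hB hm ?_, psiAux_root hB hm ?_⟩
  · rw [Real.rpow_neg_one, ← div_eq_mul_inv, le_div_iff₀ hm]; exact k1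
  · rw [Real.rpow_one]; exact k2
  · exact_mod_cast k3
end
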